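/- Let d ≥ 1 and α > 0. For every ε > 0 there exists c(ε) > 0 such that ℙ-almost surely, P₀(A(t) ≤ t^{s(d,α)−ε}) ≤ exp(−t^{c(ε)}) for all sufficiently large t. -/

import Mathlib

open MeasureTheory ProbabilityTheory Filter Set

noncomputable section

/-- `n`-step transition probabilities of the discrete-time simple random walk on `ℤ^m`. -/
def srwKernel (m : ℕ) : ℕ → (Fin m → ℤ) → (Fin m → ℤ) → ℝ
  | 0, x, y => if x = y then 1 else 0
  | n + 1, x, y =>
      (∑ i : Fin m, (srwKernel m n (Function.update x i (x i + 1)) y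
        + srwKernel m n (Function.update x i (x i - 1)) y)) / (2 * m)

/-- Transition kernel of the continuous-time simple random walk on `ℤ^m` which jumps to
each of its `2m` nearest neighbours at rate `1` (total jump rate `2m`). -/
def heatKernel (m : ℕ) (t : ℝ) (x y : Fin m → ℤ) : ℝ :=
  ∑' n : ℕ, Real.exp (-(2 * m) * t) * ((2 * m) * t) ^ n / n.factorial * srwKernel m n x y

/-- `(P, S)` is (a realization of) the continuous-time simple random walk on `ℤ^m`:
under `P x` the process `S` starts at `x`, has right-continuous (piecewise constant)
paths, and its finite-dimensional distributions are given by the heat kernel. -/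
structure IsCTSRW (m : ℕ) {Ω : Type*} [MeasurableSpace Ω]
    (P : (Fin m → ℤ) → Measure Ω) (S : ℝ → Ω → (Fin m → ℤ)) : Prop where
  prob : ∀ x, IsProbabilityMeasure (P x)
  meas : Measurable fun p : ℝ × Ω => S p.1 p.2
  start : ∀ x, ∀ᵐ ω ∂ P x, S 0 ω = x
  rightCont : ∀ x, ∀ᵐ ω ∂ P x, ∀ t : ℝ, 0 ≤ t →
    ∃ ε > (0 : ℝ), ∀ u, t ≤ u → u < t + ε → S u ω = S t ω
  fdd : ∀ x (n : ℕ) (t : Fin (n + 1) → ℝ), 0 ≤ t 0 →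
    (∀ i : Fin n, t i.castSucc ≤ t i.succ) →
    ∀ y : Fin (n + 1) → (Fin m → ℤ),
      (P x {ω | ∀ i, S (t i) ω = y i}).toReal
        = heatKernel m (t 0) x (y 0)
          * ∏ i : Fin n, heatKernel m (t i.succ - t i.castSucc) (y i.castSucc) (y i.succ)

/-- `z` is an i.i.d. nonnegative random scenery on `ℤ^d` whose common upper tail decays
like `r^{-α+o(1)}`. -/
structure IsScenery (d : ℕ) (α : ℝ) {Ω : Type*} [MeasurableSpace Ω]
    (μ : Measure Ω) (z : (Fin d → ℤ) → Ω → ℝ) : Prop where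
  prob : IsProbabilityMeasure μ
  meas : ∀ x, Measurable (z x)
  nonneg : ∀ x ω, 0 ≤ z x ω
  indep : iIndepFun z μ
  ident : ∀ x, IdentDistrib (z x) (z 0) μ μ
  tail : Tendsto (fun r : ℝ => Real.log (μ {ω | r < z 0 ω}).toReal / Real.log r)
    atTop (nhds (-α))

/-- The random walk in random scenery `A(t) = ∫₀ᵗ z(S_u) du`. -/
def rwrs {Ωz Ωw : Type*} (d : ℕ) (z : (Fin d → ℤ) → Ωz → ℝ)
    (S : ℝ → Ωw → (Fin d → ℤ)) (t : ℝ) (ζ : Ωz) (ω : Ωw) : ℝ :=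
  ∫ u in Set.Ioc (0 : ℝ) t, z (S u ω) ζ

end

open MeasureTheory ProbabilityTheory Filter Set

/-- The typical growth exponent `s(d,α)` of the random walk in random scenery. -/
noncomputable def sExp (d : ℕ) (α : ℝ) : ℝ :=
  if d = 1 then max ((α + 1) / (2 * α)) 1 else max (1 / α) 1


open MeasureTheory ProbabilityTheory Filter Set

lemma srw_nonneg (m n : ℕ) (x y : Fin m → ℤ) : 0 ≤ srwKernel m n x y := by
  induction n generalizing x with
  | zero => simp only [srwKernel]; split_ifs <;> norm_num
  | succ n ih =>
    simp only [srwKernel]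
    exact div_nonneg (Finset.sum_nonneg fun i _ => add_nonneg (ih _) (ih _)) (by positivity)

/-- the `ℓ¹` distance -/
def l1d (m : ℕ) (x y : Fin m → ℤ) : ℝ := ∑ i, |((x i : ℝ) - y i)|

lemma l1d_update (m : ℕ) (x y : Fin m → ℤ) (i : Fin m) (a : ℤ) :
    l1d m x y ≤ l1d m (Function.update x i a) y + |((x i : ℝ) - a)| := by
  unfold l1d
  rw [← Finset.add_sum_erase _ _ (Finset.mem_univ i), ← Finset.add_sum_erase _ (fun j => |((Function.update x i a j : ℤ) : ℝ) - y j|) (Finset.mem_univ i)]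
  have : ∑ j ∈ Finset.univ.erase i, |((Function.update x i a j : ℤ) : ℝ) - y j|
      = ∑ j ∈ Finset.univ.erase i, |((x j : ℝ) - y j)| := by
    apply Finset.sum_congr rfl
    intro j hj
    rw [Function.update_of_ne (Finset.ne_of_mem_erase hj)]
  rw [this]
  simp only [Function.update_self]
  have := abs_sub_le (x i : ℝ) a (y i)
  linarith

lemma srw_le_exp (m n : ℕ) (hm : 1 ≤ m) (x y : Fin m → ℤ) :
    srwKernel m n x y ≤ Real.exp (2 * (n - l1d m x y)) := by
  induction n generalizing x with
  | zero =>
    simp only [srwKernel]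
    split_ifs with h
    · subst h; simp [l1d]
    · positivity
  | succ n ih =>
    simp only [srwKernel]
    have hm' : (0 : ℝ) < m := by exact_mod_cast hm
    rw [div_le_iff₀ (by positivity)]
    have key : ∀ i : Fin m, srwKernel m n (Function.update x i (x i + 1)) y
        + srwKernel m n (Function.update x i (x i - 1)) y
        ≤ 2 * Real.exp (2 * ((n + 1 : ℕ) - l1d m x y)) := by
      intro i
      have h1 := (ih (Function.update x i (x i + 1))).trans (Real.exp_le_exp.2
        (show _ ≤ 2 * (((n + 1 : ℕ) : ℝ) - l1d m x y) by
          have := l1d_update m x y i (x i + 1)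
          push_cast at this ⊢
          have e : |(x i : ℝ) - (x i + 1)| = 1 := by simp
          rw [e] at this; linarith))
      have h2 := (ih (Function.update x i (x i - 1))).trans (Real.exp_le_exp.2
        (show _ ≤ 2 * (((n + 1 : ℕ) : ℝ) - l1d m x y) by
          have := l1d_update m x y i (x i - 1)
          push_cast at this ⊢
          have e : |(x i : ℝ) - (x i - 1)| = 1 := by simp
          rw [e] at this; linarith))
      linarith
    refine (Finset.sum_le_sum fun i _ => key i).trans ?_
    simp only [Finset.sum_const, Finset.card_univ, Fintype.card_fin, nsmul_eq_mul]
    apply le_of_eq; ring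

lemma real_hasSum_exp (x : ℝ) : HasSum (fun n : ℕ => x ^ n / n.factorial) (Real.exp x) := by
  rw [Real.exp_eq_exp_ℝ]
  exact NormedSpace.expSeries_div_hasSum_exp x

lemma heat_le_exp (m : ℕ) (hm : 1 ≤ m) (u : ℝ) (hu : 0 ≤ u) (x y : Fin m → ℤ) :
    heatKernel m u x y ≤ Real.exp (2 * m * u * Real.exp 2) * Real.exp (-2 * l1d m x y) := by
  have hs := (real_hasSum_exp (2 * m * u * Real.exp 2)).mul_right (Real.exp (-2 * l1d m x y))
  unfold heatKernel
  have hle : ∀ n : ℕ, Real.exp (-(2 * m) * u) * ((2 * m) * u) ^ n / n.factorial * srwKernel m n x y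
      ≤ (2 * m * u * Real.exp 2) ^ n / n.factorial * Real.exp (-2 * l1d m x y) := by
    intro n
    have h1 : Real.exp (-(2 * m) * u) ≤ 1 := Real.exp_le_one_iff.2 (by
      have : (0:ℝ) ≤ 2 * m * u := by positivity
      linarith)
    have h2 := srw_le_exp m n hm x y
    have h3 : Real.exp (2 * (n - l1d m x y)) = Real.exp 2 ^ n * Real.exp (-2 * l1d m x y) := by
      rw [← Real.exp_nat_mul, ← Real.exp_add]; ring_nf
    calc Real.exp (-(2 * m) * u) * ((2 * m) * u) ^ n / n.factorial * srwKernel m n x y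
        ≤ 1 * ((2 * m) * u) ^ n / n.factorial * (Real.exp 2 ^ n * Real.exp (-2 * l1d m x y)) := by
          rw [← h3]
          have := srw_nonneg m n x y
          gcongr
      _ = _ := by rw [mul_pow (2 * m * u)]; ring
  have hsum : Summable fun n : ℕ => Real.exp (-(2 * m) * u) * ((2 * m) * u) ^ n / n.factorial * srwKernel m n x y :=
    Summable.of_nonneg_of_le (fun n => mul_nonneg (by positivity) (srw_nonneg m n x y)) hle hs.summable
  exact hasSum_le hle hsum.hasSum hs

lemma heat_nonneg (m : ℕ) (u : ℝ) (hu : 0 ≤ u) (x y : Fin m → ℤ) : 0 ≤ heatKernel m u x y :=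
  tsum_nonneg fun n => mul_nonneg (by positivity) (srw_nonneg m n x y)

/-- Lebesgue measure on one period -/
noncomputable def nuPer : Measure ℝ := volume.restrict (Ioc (-Real.pi) Real.pi)

instance : IsFiniteMeasure nuPer := by unfold nuPer; infer_instance

lemma int_char (k : ℤ) : ∫ θ, Complex.exp (Complex.I * θ * k) ∂nuPer
    = if k = 0 then (2 * Real.pi : ℂ) else 0 := by
  unfold nuPer
  rw [← intervalIntegral.integral_of_le (by linarith [Real.pi_pos])]
  split_ifs with h
  · subst h; simp; ring
  · have hk : (Complex.I * k : ℂ) ≠ 0 := by simp [h]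
    have : ∀ θ : ℝ, Complex.exp (Complex.I * θ * k) = Complex.exp ((Complex.I * k) * θ) := by
      intro θ; ring_nf
    simp_rw [this]
    rw [integral_exp_mul_complex hk]
    have e : Complex.exp (Complex.I * k * (Real.pi : ℝ)) = Complex.exp (Complex.I * k * ((-Real.pi : ℝ) : ℂ)) := by
      rw [Complex.exp_eq_exp_iff_exists_int]
      exact ⟨k, by push_cast; ring⟩
    rw [e, sub_self, zero_div]

lemma srw_fourier (m n : ℕ) (hm : 1 ≤ m) (x y : Fin m → ℤ) :
    ((2 * Real.pi : ℂ)) ^ m * (srwKernel m n x y : ℂ)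
      = ∫ θ : Fin m → ℝ, ((∑ i, Complex.cos (θ i)) / m) ^ n
          * ∏ j, Complex.exp (Complex.I * θ j * ((x j - y j : ℤ) : ℂ)) ∂(Measure.pi fun _ => nuPer) := by
  have hm' : (m : ℂ) ≠ 0 := by exact_mod_cast (by omega : m ≠ 0)
  induction n generalizing x with
  | zero =>
    simp only [pow_zero, one_mul, srwKernel]
    rw [integral_fintype_prod_eq_prod (fun (j : Fin m) (θ : ℝ) => Complex.exp (Complex.I * θ * ((x j - y j : ℤ) : ℂ)))]
    simp_rw [int_char, sub_eq_zero]
    split_ifs with h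
    · subst h; simp
    · obtain ⟨j, hj⟩ := Function.ne_iff.1 h
      rw [Finset.prod_eq_zero (Finset.mem_univ j) (by simp [hj])]; simp
  | succ n ih =>
    have hintgr : ∀ x' : Fin m → ℤ, Integrable (fun θ : Fin m → ℝ => ((∑ i, Complex.cos (θ i)) / m) ^ n
          * ∏ j, Complex.exp (Complex.I * θ j * ((x' j - y j : ℤ) : ℂ))) (Measure.pi fun _ => nuPer) := by
      intro x'
      have hc : Continuous (fun θ : Fin m → ℝ => ((∑ i, Complex.cos (θ i)) / m) ^ n
          * ∏ j, Complex.exp (Complex.I * θ j * ((x' j - y j : ℤ) : ℂ))) := by fun_prop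
      refine Integrable.of_bound hc.aestronglyMeasurable 1 (Eventually.of_forall fun θ => ?_)
      rw [norm_mul, norm_prod, norm_pow]
      have h1 : ∏ j, ‖Complex.exp (Complex.I * θ j * ((x' j - y j : ℤ) : ℂ))‖ = 1 := by
        apply Finset.prod_eq_one
        intro j _
        rw [Complex.norm_exp]
        simp
      rw [h1, mul_one]
      apply pow_le_one₀ (norm_nonneg _)
      rw [norm_div, Complex.norm_natCast, div_le_one (by exact_mod_cast hm)]
      refine (norm_sum_le _ _).trans ?_
      calc ∑ i, ‖Complex.cos (θ i)‖ ≤ ∑ i : Fin m, (1 : ℝ) := by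
            apply Finset.sum_le_sum; intro i _
            rw [← Complex.ofReal_cos, Complex.norm_real]; exact Real.abs_cos_le_one _
        _ = m := by simp
    simp only [srwKernel]
    simp only [Complex.ofReal_div, Complex.ofReal_sum, Complex.ofReal_add, Complex.ofReal_mul,
      Complex.ofReal_natCast, Complex.ofReal_ofNat]
    rw [← mul_div_assoc, Finset.mul_sum]
    simp_rw [mul_add, ih]
    have hs1 : ∀ i : Fin m, _ := fun i => integral_add (hintgr (Function.update x i (x i + 1)))
      (hintgr (Function.update x i (x i - 1)))
    simp_rw [← hs1]
    have hs2 := integral_finsetSum Finset.univ (fun i _ => (hintgr (Function.update x i (x i + 1))).add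
      (hintgr (Function.update x i (x i - 1))))
    simp only [Pi.add_apply] at hs2
    rw [← hs2, ← integral_div]
    congr 1
    ext θ
    have upd : ∀ (i : Fin m) (a : ℤ),
        ∏ j, Complex.exp (Complex.I * θ j * ((Function.update x i (x i + a) j - y j : ℤ) : ℂ))
        = Complex.exp (Complex.I * θ i * a) * ∏ j, Complex.exp (Complex.I * θ j * ((x j - y j : ℤ) : ℂ)) := by
      intro i a
      rw [← Finset.mul_prod_erase _ _ (Finset.mem_univ i), ← Finset.mul_prod_erase _ (fun j => Complex.exp (Complex.I * θ j * ((x j - y j : ℤ) : ℂ))) (Finset.mem_univ i), ← mul_assoc, ← Complex.exp_add]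
      congr 1
      · congr 1; simp; ring
      · apply Finset.prod_congr rfl
        intro j hj
        rw [Function.update_of_ne (Finset.ne_of_mem_erase hj)]
    have hsum : ∀ i : Fin m, ((∑ i, Complex.cos (θ i)) / m) ^ n *
          ∏ j, Complex.exp (Complex.I * θ j * ((Function.update x i (x i + 1) j - y j : ℤ) : ℂ)) +
        ((∑ i, Complex.cos (θ i)) / m) ^ n *
          ∏ j, Complex.exp (Complex.I * θ j * ((Function.update x i (x i - 1) j - y j : ℤ) : ℂ))
        = (2 * Complex.cos (θ i)) * (((∑ i, Complex.cos (θ i)) / m) ^ n *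
          ∏ j, Complex.exp (Complex.I * θ j * ((x j - y j : ℤ) : ℂ))) := by
      intro i
      rw [upd i 1, sub_eq_add_neg (x i) 1, upd i (-1), Complex.cos]
      push_cast
      ring_nf
    rw [Finset.sum_congr rfl (fun i _ => hsum i), ← Finset.sum_mul, ← Finset.mul_sum]
    rw [pow_succ]
    field_simp

lemma srw_diag (m n : ℕ) (hm : 1 ≤ m) (x : Fin m → ℤ) :
    (2 * Real.pi) ^ m * srwKernel m n x x
      = ∫ θ : Fin m → ℝ, ((∑ i, Real.cos (θ i)) / m) ^ n ∂(Measure.pi fun _ => nuPer) := by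
  have h := srw_fourier m n hm x x
  simp only [sub_self, Int.cast_zero, mul_zero, Complex.exp_zero, Finset.prod_const_one, mul_one] at h
  have h2 : ∀ θ : Fin m → ℝ, ((∑ i, Complex.cos (θ i)) / m) ^ n = (((((∑ i, Real.cos (θ i)) / m) ^ n : ℝ)) : ℂ) := by
    intro θ; push_cast; rfl
  simp_rw [h2] at h
  rw [integral_complex_ofReal] at h
  exact_mod_cast h

lemma heat_diag (m : ℕ) (hm : 1 ≤ m) (u : ℝ) (hu : 0 ≤ u) (x : Fin m → ℤ) :
    (2 * Real.pi) ^ m * heatKernel m u x x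
      = (∫ θ, Real.exp (-(2 * u) * (1 - Real.cos θ)) ∂nuPer) ^ m := by
  have hm' : (0 : ℝ) < m := by exact_mod_cast hm
  have hφ : ∀ θ : Fin m → ℝ, |(∑ i, Real.cos (θ i)) / m| ≤ 1 := by
    intro θ
    rw [abs_div, Nat.abs_cast, div_le_one hm']
    refine (Finset.abs_sum_le_sum_abs _ _).trans ?_
    calc ∑ i, |Real.cos (θ i)| ≤ ∑ i : Fin m, (1 : ℝ) :=
          Finset.sum_le_sum fun i _ => Real.abs_cos_le_one _
      _ = m := by simp
  unfold heatKernel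
  rw [← tsum_mul_left]
  set c : ℕ → ℝ := fun n => Real.exp (-(2 * m) * u) * ((2 * m) * u) ^ n / n.factorial with hc
  have hc0 : ∀ n, 0 ≤ c n := fun n => by simp only [hc]; positivity
  have hcs : Summable c := by
    have := (Real.summable_pow_div_factorial ((2 * m) * u)).mul_left (Real.exp (-(2 * m) * u))
    refine this.congr fun n => ?_
    simp only [hc]; ring
  have h1 : ∀ n, (2 * Real.pi) ^ m * (c n * srwKernel m n x x)
      = ∫ θ : Fin m → ℝ, c n * ((∑ i, Real.cos (θ i)) / m) ^ n ∂(Measure.pi fun _ => nuPer) := by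
    intro n
    rw [integral_const_mul, ← srw_diag m n hm x]; ring
  rw [tsum_congr h1]
  have hb : ∀ n (θ : Fin m → ℝ), ‖c n * ((∑ i, Real.cos (θ i)) / m) ^ n‖ ≤ c n := by
    intro n θ
    rw [norm_mul, Real.norm_of_nonneg (hc0 n), norm_pow]
    exact mul_le_of_le_one_right (hc0 n) (pow_le_one₀ (norm_nonneg _) (hφ θ))
  have hcont : ∀ n, Continuous (fun θ : Fin m → ℝ => c n * ((∑ i, Real.cos (θ i)) / m) ^ n) := by
    intro n; fun_prop
  have hi : ∀ n, Integrable (fun θ : Fin m → ℝ => c n * ((∑ i, Real.cos (θ i)) / m) ^ n) (Measure.pi fun _ => nuPer) :=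
    fun n => Integrable.of_bound (hcont n).aestronglyMeasurable (c n) (Eventually.of_forall (hb n))
  rw [integral_tsum_of_summable_integral_norm hi ?_]
  · have hp := integral_fintype_prod_eq_pow (ι := Fin m) (μ := nuPer) (fun θ : ℝ => Real.exp (-(2 * u) * (1 - Real.cos θ)))
    rw [Fintype.card_fin] at hp
    rw [← hp]
    congr 1
    ext θ
    have e1 : ∀ n, c n * ((∑ i, Real.cos (θ i)) / m) ^ n = Real.exp (-(2 * m) * u) * ((2 * u * ∑ i, Real.cos (θ i)) ^ n / n.factorial) := by
      intro n
      have : 2 * u * ∑ i, Real.cos (θ i) = (2 * m * u) * ((∑ i, Real.cos (θ i)) / m) := by field_simp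
      rw [this, mul_pow]; simp only [hc]; ring
    rw [tsum_congr e1, tsum_mul_left, (real_hasSum_exp _).tsum_eq, ← Real.exp_add, ← Real.exp_sum]
    congr 1
    rw [← Finset.mul_sum, Finset.sum_sub_distrib]; simp; ring
  · refine Summable.of_nonneg_of_le (fun n => integral_nonneg fun θ => norm_nonneg _) (fun n => ?_)
      (hcs.mul_right ((Measure.pi fun _ : Fin m => nuPer).real univ))
    refine (integral_mono (hi n).norm (integrable_const (c n)) (fun θ => hb n θ)).trans ?_
    rw [integral_const, smul_eq_mul, mul_comm]

lemma heat_diag_le (m : ℕ) (hm : 1 ≤ m) (u : ℝ) (hu : 0 < u) (x : Fin m → ℤ) :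
    heatKernel m u x x ≤ (1 / Real.sqrt u) ^ m := by
  have h := heat_diag m hm u hu.le x
  have hpi := Real.pi_pos
  have hb : 0 < 4 * u / Real.pi ^ 2 := by positivity
  have hI : ∫ θ, Real.exp (-(2 * u) * (1 - Real.cos θ)) ∂nuPer ≤ 2 * Real.pi * (1 / Real.sqrt u) := by
    have hgi := integrable_exp_neg_mul_sq hb
    calc ∫ θ, Real.exp (-(2 * u) * (1 - Real.cos θ)) ∂nuPer
        ≤ ∫ θ in Ioc (-Real.pi) Real.pi, Real.exp (-(4 * u / Real.pi ^ 2) * θ ^ 2) := by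
          unfold nuPer
          refine setIntegral_mono_on ?_ hgi.integrableOn measurableSet_Ioc ?_
          · exact (Continuous.integrableOn_Icc (by fun_prop)).mono_set Ioc_subset_Icc_self
          · intro θ hθ
            apply Real.exp_le_exp.2
            have := Real.cos_le_one_sub_mul_cos_sq (x := θ) (abs_le.2 ⟨hθ.1.le, hθ.2⟩)
            have h2 : 2 / Real.pi ^ 2 * θ ^ 2 ≤ 1 - Real.cos θ := by linarith
            have h3 := mul_le_mul_of_nonneg_left h2 (by positivity : 0 ≤ 2 * u)
            have h4 : 2 * u * (2 / Real.pi ^ 2 * θ ^ 2) = (4 * u / Real.pi ^ 2) * θ ^ 2 := by ring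
            linarith
      _ ≤ ∫ θ, Real.exp (-(4 * u / Real.pi ^ 2) * θ ^ 2) :=
          setIntegral_le_integral hgi (Eventually.of_forall fun θ => by positivity)
      _ = Real.sqrt (Real.pi / (4 * u / Real.pi ^ 2)) := integral_gaussian _
      _ ≤ 2 * Real.pi * (1 / Real.sqrt u) := by
          rw [Real.sqrt_le_left (by positivity)]
          rw [mul_pow, div_pow, Real.sq_sqrt hu.le]
          have : Real.pi ≤ 4 := Real.pi_le_four
          rw [div_div_eq_mul_div, mul_pow, one_pow, mul_one_div, div_le_div_iff₀ (by positivity) hu]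
          have : Real.pi * Real.pi ^ 2 ≤ 4 * Real.pi ^ 2 := by gcongr
          nlinarith [mul_le_mul_of_nonneg_right this hu.le, mul_pos (pow_pos hpi 2) hu]
  have h0 : 0 ≤ ∫ θ, Real.exp (-(2 * u) * (1 - Real.cos θ)) ∂nuPer := integral_nonneg fun θ => by positivity
  have h1 := pow_le_pow_left₀ h0 hI m
  rw [← h, mul_pow (2 * Real.pi) (1 / Real.sqrt u)] at h1
  exact le_of_mul_le_mul_left h1 (by positivity : (0:ℝ) < (2 * Real.pi) ^ m)

open MeasureTheory ProbabilityTheory Filter Set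

section walk
variable {d : ℕ} {Ωw : Type*} [MeasurableSpace Ωw]
    {P : (Fin d → ℤ) → Measure Ωw} {S : ℝ → Ωw → (Fin d → ℤ)}

lemma walk_meas (hS : IsCTSRW d P S) (t : ℝ) : Measurable (S t) :=
  hS.meas.comp (measurable_const.prodMk measurable_id)

lemma walk_one (hS : IsCTSRW d P S) (t : ℝ) (ht : 0 ≤ t) (x y : Fin d → ℤ) :
    P x {ω | S t ω = y} = ENNReal.ofReal (heatKernel d t x y) := by
  have := hS.prob x
  have h := hS.fdd x 0 (fun _ => t) ht (fun i => i.elim0) (fun _ => y)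
  simp only [Finset.univ_eq_empty, Finset.prod_empty, mul_one, forall_const] at h
  rw [← h, ENNReal.ofReal_toReal (measure_ne_top _ _)]

lemma walk_tsum (hS : IsCTSRW d P S) (t : ℝ) (x : Fin d → ℤ) :
    ∑' y, P x {ω | S t ω = y} = 1 := by
  have := hS.prob x
  have h := lintegral_countable' (μ := (P x).map (S t)) (fun _ => (1 : ENNReal))
  rw [lintegral_one, Measure.map_apply (walk_meas hS t) MeasurableSet.univ, preimage_univ, measure_univ] at h
  rw [h]
  refine tsum_congr fun y => ?_
  rw [one_mul, Measure.map_apply (walk_meas hS t) (measurableSet_singleton y)]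
  rfl

lemma walk_const_le (hd : 1 ≤ d) (hS : IsCTSRW d P S) (k : ℕ) (t0 : ℝ) (h0 : 0 ≤ t0)
    (Δ : Fin k → ℕ) (hΔ : ∀ j, 1 ≤ Δ j) :
    P 0 {ω | ∃ x, ∀ j : Fin (k + 1), S (t0 + (Fin.partialSum Δ j : ℕ)) ω = x}
      ≤ ∏ j, ENNReal.ofReal ((1 / Real.sqrt (Δ j)) ^ d) := by
  have := hS.prob 0
  have e : {ω | ∃ x, ∀ j : Fin (k + 1), S (t0 + (Fin.partialSum Δ j : ℕ)) ω = x}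
      = ⋃ x, {ω | ∀ j : Fin (k + 1), S (t0 + (Fin.partialSum Δ j : ℕ)) ω = x} := by
    ext ω; simp
  rw [e]
  refine (measure_iUnion_le _).trans ?_
  have key : ∀ x, P 0 {ω | ∀ j : Fin (k + 1), S (t0 + (Fin.partialSum Δ j : ℕ)) ω = x}
      ≤ P 0 {ω | S t0 ω = x} * ∏ j, ENNReal.ofReal ((1 / Real.sqrt (Δ j)) ^ d) := by
    intro x
    have h := hS.fdd 0 k (fun j => t0 + (Fin.partialSum Δ j : ℕ)) (by simpa using h0)
      (fun i => by simp [Fin.partialSum_succ]) (fun _ => x)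
    rw [← ENNReal.ofReal_toReal (measure_ne_top (P 0) {ω | ∀ j : Fin (k + 1), S (t0 + (Fin.partialSum Δ j : ℕ)) ω = x}), h, walk_one hS t0 h0,
      ENNReal.ofReal_mul (heat_nonneg _ _ (by simpa using h0) _ _)]
    simp only [Fin.partialSum_zero, Nat.cast_zero, add_zero]
    gcongr
    rw [← ENNReal.ofReal_prod_of_nonneg (fun j _ => by positivity)]
    apply ENNReal.ofReal_le_ofReal
    apply Finset.prod_le_prod
    · intro j _
      exact heat_nonneg _ _ (by simp [Fin.partialSum_succ]) _ _
    · intro j _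
      have : t0 + ((Fin.partialSum Δ j.succ : ℕ) : ℝ) - (t0 + ((Fin.partialSum Δ j.castSucc : ℕ) : ℝ)) = (Δ j : ℝ) := by
        rw [Fin.partialSum_succ]; push_cast; ring
      rw [this]
      exact heat_diag_le d hd _ (by exact_mod_cast hΔ j) x
  refine (ENNReal.tsum_le_tsum key).trans ?_
  rw [ENNReal.tsum_mul_right, walk_tsum hS, one_mul]

/-- the number of visits to `x` among the times `v, v+1, …, v+n-1` -/
noncomputable def visits (S : ℝ → Ωw → (Fin d → ℤ)) (v : ℝ) (n : ℕ) (ω : Ωw) (x : Fin d → ℤ) : ℕ :=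
  ((Finset.range n).filter fun i : ℕ => S (v + i) ω = x).card

lemma subset_param (n k : ℕ) (s : Finset ℕ) (hs : s ∈ Finset.powersetCard (k + 1) (Finset.range n)) :
    ∃ i0 ∈ Finset.range n, ∃ Δ ∈ Fintype.piFinset (fun _ : Fin k => Finset.Icc 1 n),
      Finset.univ.image (fun j : Fin (k + 1) => i0 + Fin.partialSum Δ j) = s := by
  obtain ⟨hsub, hcard⟩ := Finset.mem_powersetCard.1 hs
  set o := s.orderEmbOfFin hcard with ho
  have hmem : ∀ j, o j ∈ s := fun j => Finset.orderEmbOfFin_mem s hcard j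
  have hlt : ∀ j, o j < n := fun j => Finset.mem_range.1 (hsub (hmem j))
  have hmono : ∀ j : Fin k, o j.castSucc < o j.succ := fun j => o.strictMono (Fin.castSucc_lt_succ)
  refine ⟨o 0, Finset.mem_range.2 (hlt 0), fun j => o j.succ - o j.castSucc, ?_, ?_⟩
  · rw [Fintype.mem_piFinset]
    intro j
    have := hmono j
    have := hlt j.succ
    rw [Finset.mem_Icc]; omega
  · have : (fun j : Fin (k + 1) => o 0 + Fin.partialSum (fun j : Fin k => o j.succ - o j.castSucc) j) = o := by
      funext j
      induction j using Fin.induction with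
      | zero => simp
      | succ j ih =>
        rw [Fin.partialSum_succ]
        have := hmono j
        omega
    rw [this]
    exact Finset.image_orderEmbOfFin_univ s hcard

lemma walk_count (hd : 1 ≤ d) (hS : IsCTSRW d P S) (v : ℝ) (hv : 0 ≤ v) (n k M : ℕ) :
    (Nat.choose (M + 1) (k + 1) : ENNReal) * P 0 {ω | ∃ x, M < visits S v n ω x}
      ≤ n * (∑ i ∈ Finset.Icc 1 n, ENNReal.ofReal ((1 / Real.sqrt i) ^ d)) ^ k := by
  classical
  let E : Finset ℕ → Set Ωw := fun s => {ω | ∃ x, ∀ i ∈ s, S (v + i) ω = x}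
  have hE : ∀ s, MeasurableSet (E s) := by
    intro s
    have : E s = ⋃ x, ⋂ i ∈ s, {ω | S (v + (i : ℕ)) ω = x} := by ext ω; simp [E]
    rw [this]
    refine MeasurableSet.iUnion fun x => Finset.measurableSet_biInter _ fun i _ => ?_
    exact walk_meas hS _ (measurableSet_singleton x)
  let F : Ωw → ENNReal := fun ω => ∑ s ∈ Finset.powersetCard (k + 1) (Finset.range n), (E s).indicator 1 ω
  have hFm : Measurable F := Finset.measurable_sum _ fun s _ => measurable_one.indicator (hE s)
  have h1 : {ω | ∃ x, M < visits S v n ω x} ⊆ {ω | (Nat.choose (M + 1) (k + 1) : ENNReal) ≤ F ω} := by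
    rintro ω ⟨x, hx⟩
    simp only [mem_setOf_eq]
    set V := (Finset.range n).filter fun i : ℕ => S (v + i) ω = x with hV
    have hVc : M + 1 ≤ V.card := hx
    calc (Nat.choose (M + 1) (k + 1) : ENNReal) ≤ (Nat.choose V.card (k + 1) : ℕ) := by
          exact_mod_cast Nat.choose_le_choose _ hVc
      _ = ∑ s ∈ Finset.powersetCard (k + 1) V, (1 : ENNReal) := by
          rw [Finset.sum_const, Finset.card_powersetCard]; simp
      _ ≤ ∑ s ∈ Finset.powersetCard (k + 1) V, (E s).indicator 1 ω := by
          apply Finset.sum_le_sum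
          intro s hs
          have hω : ω ∈ E s := ⟨x, fun i hi => (Finset.mem_filter.1 ((Finset.mem_powersetCard.1 hs).1 hi)).2⟩
          rw [indicator_of_mem hω]; simp
      _ ≤ F ω := by
          apply Finset.sum_le_sum_of_subset
          exact Finset.powersetCard_mono (Finset.filter_subset _ _)
  calc (Nat.choose (M + 1) (k + 1) : ENNReal) * P 0 {ω | ∃ x, M < visits S v n ω x}
      ≤ (Nat.choose (M + 1) (k + 1) : ENNReal) * P 0 {ω | (Nat.choose (M + 1) (k + 1) : ENNReal) ≤ F ω} := by
        gcongr
    _ ≤ ∫⁻ ω, F ω ∂(P 0) := mul_meas_ge_le_lintegral hFm _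
    _ = ∑ s ∈ Finset.powersetCard (k + 1) (Finset.range n), P 0 (E s) := by
        rw [lintegral_finset_sum _ fun s _ => measurable_one.indicator (hE s)]
        exact Finset.sum_congr rfl fun s _ => lintegral_indicator_one (hE s)
    _ ≤ ∑ s ∈ (Finset.range n ×ˢ Fintype.piFinset (fun _ : Fin k => Finset.Icc 1 n)).image
          (fun q => Finset.univ.image (fun j : Fin (k + 1) => q.1 + Fin.partialSum q.2 j)), P 0 (E s) := by
        apply Finset.sum_le_sum_of_subset
        intro s hs
        obtain ⟨i0, hi0, Δ, hΔ, h⟩ := subset_param n k s hs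
        exact Finset.mem_image.2 ⟨(i0, Δ), Finset.mem_product.2 ⟨hi0, hΔ⟩, h⟩
    _ ≤ ∑ q ∈ Finset.range n ×ˢ Fintype.piFinset (fun _ : Fin k => Finset.Icc 1 n),
          P 0 (E (Finset.univ.image (fun j : Fin (k + 1) => q.1 + Fin.partialSum q.2 j))) := by
        apply Finset.sum_image_le_of_nonneg
        intro _ _; exact zero_le
    _ ≤ ∑ q ∈ Finset.range n ×ˢ Fintype.piFinset (fun _ : Fin k => Finset.Icc 1 n),
          ∏ j, ENNReal.ofReal ((1 / Real.sqrt (q.2 j)) ^ d) := by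
        apply Finset.sum_le_sum
        rintro ⟨i0, Δ⟩ hq
        have hΔ : ∀ j, 1 ≤ Δ j := fun j =>
          (Finset.mem_Icc.1 (Fintype.mem_piFinset.1 (Finset.mem_product.1 hq).2 j)).1
        refine le_trans (measure_mono ?_) (walk_const_le hd hS k (v + i0) (by positivity) Δ hΔ)
        rintro ω ⟨x, hx⟩
        refine ⟨x, fun j => ?_⟩
        have := hx _ (Finset.mem_image_of_mem _ (Finset.mem_univ j))
        rw [← this]; push_cast; ring_nf
    _ = n * (∑ i ∈ Finset.Icc 1 n, ENNReal.ofReal ((1 / Real.sqrt i) ^ d)) ^ k := by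
        rw [Finset.sum_product]
        simp only [Finset.sum_const, Finset.card_range, nsmul_eq_mul]
        congr 1
        rw [← Finset.prod_univ_sum (fun _ : Fin k => Finset.Icc 1 n) (fun _ i => ENNReal.ofReal ((1 / Real.sqrt (i : ℕ)) ^ d))]
        simp
end walk

open MeasureTheory ProbabilityTheory Filter Set

lemma ev_log (K η : ℝ) (hη : 0 < η) : ∀ᶠ n : ℕ in atTop, K * (1 + Real.log n) ≤ (n : ℝ) ^ η := by
  have h1 : (fun x : ℝ => K * (1 + Real.log x)) =o[atTop] fun x => x ^ η := by
    refine Asymptotics.IsLittleO.const_mul_left ?_ K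
    refine Asymptotics.IsLittleO.add ?_ (isLittleO_log_rpow_atTop hη)
    exact Asymptotics.isLittleO_const_left.2 (Or.inr (tendsto_norm_atTop_atTop.comp (tendsto_rpow_atTop hη)))
  have h2 := (h1.bound one_pos)
  have h3 := tendsto_natCast_atTop_atTop (R := ℝ) |>.eventually h2
  filter_upwards [h3] with n hn
  have := (le_abs_self _).trans hn
  rwa [one_mul, Real.norm_of_nonneg (by positivity)] at this

lemma ev_const (K η : ℝ) (hη : 0 < η) : ∀ᶠ n : ℕ in atTop, K ≤ (n : ℝ) ^ η :=
  ((tendsto_rpow_atTop hη).comp (tendsto_natCast_atTop_atTop (R := ℝ))).eventually_ge_atTop K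

/-- the local time exponent -/
noncomputable def bet (d : ℕ) : ℝ := if d = 1 then 1 / 2 else 0

lemma bet_nonneg (d : ℕ) : 0 ≤ bet d := by unfold bet; split_ifs <;> norm_num

lemma bet_lt (d : ℕ) : bet d < 1 := by unfold bet; split_ifs <;> norm_num

lemma diag_le_bet (d : ℕ) (hd : 1 ≤ d) (n i : ℕ) (hi : 1 ≤ i) (hin : i ≤ n) :
    (1 / Real.sqrt i) ^ d ≤ (n : ℝ) ^ bet d * (i : ℝ)⁻¹ := by
  have hi' : (1 : ℝ) ≤ i := by exact_mod_cast hi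
  have hin' : (i : ℝ) ≤ n := by exact_mod_cast hin
  have h1 : (1 / Real.sqrt i) ^ d ≤ (i : ℝ) ^ bet d * (i : ℝ)⁻¹ := by
    unfold bet
    split_ifs with h
    · subst h
      rw [pow_one, ← Real.sqrt_eq_rpow]
      have : (i : ℝ)⁻¹ = 1 / (Real.sqrt i * Real.sqrt i) := by rw [Real.mul_self_sqrt (by linarith)]; simp
      rw [this]
      have hs : 0 < Real.sqrt i := Real.sqrt_pos.2 (by linarith)
      apply le_of_eq; field_simp
    · rw [Real.rpow_zero, one_mul]
      have h2 : 2 ≤ d := by omega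
      have hs : 1 ≤ Real.sqrt i := Real.one_le_sqrt.2 hi'
      calc (1 / Real.sqrt i) ^ d ≤ (1 / Real.sqrt i) ^ 2 :=
            pow_le_pow_of_le_one (by positivity) (by rw [div_le_one (by linarith)]; exact hs) h2
        _ = _ := by rw [div_pow, Real.sq_sqrt (by linarith)]; simp
  refine h1.trans ?_
  gcongr
  exact bet_nonneg d

lemma green_le (d : ℕ) (hd : 1 ≤ d) (n : ℕ) :
    ∑ i ∈ Finset.Icc 1 n, ENNReal.ofReal ((1 / Real.sqrt i) ^ d)
      ≤ ENNReal.ofReal ((n : ℝ) ^ bet d * (1 + Real.log n)) := by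
  rw [← ENNReal.ofReal_sum_of_nonneg (fun i _ => by positivity)]
  apply ENNReal.ofReal_le_ofReal
  calc ∑ i ∈ Finset.Icc 1 n, (1 / Real.sqrt i) ^ d ≤ ∑ i ∈ Finset.Icc 1 n, (n : ℝ) ^ bet d * (i : ℝ)⁻¹ := by
        apply Finset.sum_le_sum; intro i hi
        rw [Finset.mem_Icc] at hi
        exact diag_le_bet d hd n i hi.1 hi.2
    _ = (n : ℝ) ^ bet d * harmonic n := by
        rw [← Finset.mul_sum, harmonic_eq_sum_Icc]; push_cast; rfl
    _ ≤ _ := by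
        gcongr
        exact harmonic_le_one_add_log n

lemma choose_lower (M k : ℕ) (G : ℝ) (hG : 1 ≤ G) (h : Real.exp 1 * G * (k + 1) + k ≤ M + 1) :
    Real.exp k * G ^ k ≤ Nat.choose (M + 1) (k + 1) := by
  have he : 1 ≤ Real.exp 1 := Real.one_le_exp (by norm_num)
  have hk : k ≤ M + 1 := by
    have : (k : ℝ) ≤ M + 1 := by
      have : 0 ≤ Real.exp 1 * G * (k + 1) := by positivity
      linarith
    exact_mod_cast this
  have h1 := Nat.pow_le_choose (α := ℝ) (k + 1) (M + 1)
  have h2 : ((M + 1 + 1 - (k + 1) : ℕ) : ℝ) = M + 1 - k := by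
    rw [show M + 1 + 1 - (k + 1) = M + 1 - k by omega, Nat.cast_sub hk]; push_cast; ring
  rw [h2] at h1
  have h3 : ((k + 1).factorial : ℝ) ≤ ((k : ℝ) + 1) ^ (k + 1) := by
    exact_mod_cast Nat.factorial_le_pow (k + 1)
  have h4 : (Real.exp 1 * G) ^ (k + 1) ≤ Nat.choose (M + 1) (k + 1) := by
    refine le_trans ?_ h1
    rw [le_div_iff₀ (by positivity)]
    calc (Real.exp 1 * G) ^ (k + 1) * ((k + 1).factorial : ℝ)
        ≤ (Real.exp 1 * G) ^ (k + 1) * ((k : ℝ) + 1) ^ (k + 1) := by gcongr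
      _ = (Real.exp 1 * G * (k + 1)) ^ (k + 1) := by rw [mul_pow _ ((k : ℝ) + 1)]
      _ ≤ _ := by apply pow_le_pow_left₀ (by positivity); linarith
  refine le_trans ?_ h4
  have : Real.exp k * G ^ k = (Real.exp 1 * G) ^ k := by
    rw [mul_pow, ← Real.exp_nat_mul, mul_one]
  rw [this]
  exact pow_le_pow_right₀ (by nlinarith) (by omega)

section walk
variable {d : ℕ} {Ωw : Type*} [MeasurableSpace Ωw]
    {P : (Fin d → ℤ) → Measure Ωw} {S : ℝ → Ωw → (Fin d → ℤ)}

lemma walk_tail (hd : 1 ≤ d) (hS : IsCTSRW d P S) (δ : ℝ) (hδ : 0 < δ) :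
    ∀ᶠ n : ℕ in atTop, ∀ v : ℝ, 0 ≤ v →
      P 0 {ω | ∃ x, (n : ℝ) ^ (bet d + δ) < visits S v n ω x}
        ≤ ENNReal.ofReal (Real.exp (-((n : ℝ) ^ (δ / 4)))) := by
  have hb := bet_nonneg d
  filter_upwards [ev_log (2 * Real.exp 1 + 1) (δ / 2) (by positivity), ev_log 1 (δ / 4) (by positivity),
    ev_const 2 (δ / 4) (by positivity), eventually_ge_atTop 1] with n h1 h2 h3 hn v hv
  have hn' : (1 : ℝ) ≤ n := by exact_mod_cast hn
  have hlog : 0 ≤ Real.log n := Real.log_nonneg hn'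
  set M := ⌊(n : ℝ) ^ (bet d + δ)⌋₊ with hM
  set k := ⌊(n : ℝ) ^ (δ / 2)⌋₊ with hk
  set G := (n : ℝ) ^ bet d * (1 + Real.log n) with hG
  have hnb : 1 ≤ (n : ℝ) ^ bet d := Real.one_le_rpow hn' hb
  have hG1 : 1 ≤ G := by nlinarith
  have hkle : (k : ℝ) ≤ (n : ℝ) ^ (δ / 2) := Nat.floor_le (by positivity)
  have hkgt : (n : ℝ) ^ (δ / 2) < k + 1 := Nat.lt_floor_add_one _
  have hMgt : (n : ℝ) ^ (bet d + δ) < M + 1 := Nat.lt_floor_add_one _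
  have hD : 1 ≤ (n : ℝ) ^ (δ / 2) := Real.one_le_rpow hn' (by positivity)
  have hcond : Real.exp 1 * G * (k + 1) + k ≤ M + 1 := by
    have e1 : (n : ℝ) ^ (bet d + δ) = (n : ℝ) ^ bet d * ((n : ℝ) ^ (δ / 2) * (n : ℝ) ^ (δ / 2)) := by
      rw [← Real.rpow_add (by linarith), ← Real.rpow_add (by linarith)]; ring_nf
    set D := (n : ℝ) ^ (δ / 2)
    set B := (n : ℝ) ^ bet d
    set L := 1 + Real.log n with hL
    have hL1 : 1 ≤ L := by linarith
    have e2 : Real.exp 1 * G * (k + 1) ≤ Real.exp 1 * (B * L) * (2 * D) := by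
      rw [hG]; gcongr; linarith
    have e3 : (k : ℝ) ≤ B * L * D := by
      have : 1 ≤ B * L := hG1
      nlinarith
    have e4 : B * D * ((2 * Real.exp 1 + 1) * L) ≤ B * D * D := by gcongr
    have e5 : B * D * ((2 * Real.exp 1 + 1) * L) = Real.exp 1 * (B * L) * (2 * D) + B * L * D := by ring
    nlinarith
  have hch := choose_lower M k G hG1 hcond
  have hw := walk_count hd hS v hv n k M
  have hset : {ω | ∃ x, (n : ℝ) ^ (bet d + δ) < visits S v n ω x} ⊆ {ω | ∃ x, M < visits S v n ω x} := by
    rintro ω ⟨x, hx⟩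
    exact ⟨x, (Nat.floor_lt (by positivity)).2 hx⟩
  refine (measure_mono hset).trans ?_
  set p := P 0 {ω | ∃ x, M < visits S v n ω x} with hp
  have := hS.prob 0
  have hptop : p ≠ ⊤ := measure_ne_top _ _
  rw [← ENNReal.ofReal_toReal hptop] at hw ⊢
  apply ENNReal.ofReal_le_ofReal
  have hw2 : ENNReal.ofReal ((Nat.choose (M + 1) (k + 1) : ℝ) * p.toReal) ≤ ENNReal.ofReal (n * G ^ k) := by
    rw [ENNReal.ofReal_mul (by positivity), ENNReal.ofReal_mul (by positivity), ENNReal.ofReal_natCast,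
      ENNReal.ofReal_natCast, ENNReal.ofReal_pow (by positivity)]
    refine hw.trans ?_
    gcongr
    exact green_le d hd n
  have hw3 := (ENNReal.ofReal_le_ofReal_iff (by positivity)).1 hw2
  have hw4 : Real.exp k * G ^ k * p.toReal ≤ n * G ^ k := (mul_le_mul_of_nonneg_right hch ENNReal.toReal_nonneg).trans hw3
  have hGk : 0 < G ^ k := by positivity
  have hw5 : Real.exp k * p.toReal ≤ n := by
    refine le_of_mul_le_mul_right ?_ hGk
    calc _ = Real.exp k * G ^ k * p.toReal := by ring
      _ ≤ _ := hw4
  have hw6 : p.toReal ≤ n * Real.exp (-k) := by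
    rw [Real.exp_neg, ← div_eq_mul_inv, le_div_iff₀ (Real.exp_pos _)]; linarith
  refine hw6.trans ?_
  have : (n : ℝ) = Real.exp (Real.log n) := (Real.exp_log (by linarith)).symm
  calc (n : ℝ) * Real.exp (-k) = Real.exp (Real.log n + -k) := by rw [Real.exp_add, ← this]
    _ ≤ _ := by
      apply Real.exp_le_exp.2
      have e : (n : ℝ) ^ (δ / 2) = (n : ℝ) ^ (δ / 4) * (n : ℝ) ^ (δ / 4) := by
        rw [← Real.rpow_add (by linarith)]; ring_nf
      nlinarith
end walk

open MeasureTheory ProbabilityTheory Filter Set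

section scenery
variable {d : ℕ} {α : ℝ} {Ωz : Type*} [MeasurableSpace Ωz]
    {μ : Measure Ωz} {z : (Fin d → ℤ) → Ωz → ℝ}

lemma scen_pt (l M a r w : ℝ) (hl : 0 ≤ l) (hlM : l ≤ M) (hM : 0 < M) (ha : 0 < a) (hr : 0 ≤ r)
    (hw : 0 ≤ w) :
    Real.exp (-1 / a * (l * w)) ≤ 1 - (l / M) * ((1 - Real.exp (-(M * r / a))) * (Ioi r).indicator 1 w) := by
  have hlm : l / M ≤ 1 := (div_le_one hM).2 hlM
  have hlm0 : 0 ≤ l / M := by positivity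
  have hconv := convexOn_exp.2 (mem_univ (-(M * w / a))) (mem_univ 0) hlm0 (sub_nonneg.2 hlm) (by ring)
  simp only [smul_eq_mul, mul_zero, add_zero, Real.exp_zero, mul_one] at hconv
  have e : l / M * -(M * w / a) = -1 / a * (l * w) := by field_simp
  rw [e] at hconv
  refine hconv.trans ?_
  have h1 : (1 - Real.exp (-(M * r / a))) * (Ioi r).indicator 1 w ≤ 1 - Real.exp (-(M * w / a)) := by
    by_cases h : w ∈ Ioi r
    · rw [indicator_of_mem h]
      simp only [Pi.one_apply, mul_one]
      have : M * r / a ≤ M * w / a := by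
        have : r ≤ w := le_of_lt h
        gcongr
      have := Real.exp_le_exp.2 (neg_le_neg this)
      linarith
    · rw [indicator_of_notMem h, mul_zero]
      have : Real.exp (-(M * w / a)) ≤ 1 := Real.exp_le_one_iff.2 (by
        have : 0 ≤ M * w / a := by positivity
        linarith)
      linarith
  have := mul_le_mul_of_nonneg_left h1 hlm0
  linarith

lemma scen_le (hz : IsScenery d α μ z) (Λ : Finset (Fin d → ℤ)) (l : (Fin d → ℤ) → ℝ)
    (M a r : ℝ) (hl : ∀ x, 0 ≤ l x) (hlM : ∀ x, l x ≤ M) (hM : 0 < M) (ha : 0 < a) (hr : 0 ≤ r) :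
    μ.real {ζ | ∑ x ∈ Λ, l x * z x ζ ≤ a}
      ≤ Real.exp (1 - (∑ x ∈ Λ, l x) / M * ((1 - Real.exp (-(M * r / a))) * μ.real {ζ | r < z 0 ζ})) := by
  have := hz.prob
  set X : (Fin d → ℤ) → Ωz → ℝ := fun x ζ => l x * z x ζ with hX
  have hXm : ∀ x, Measurable (X x) := fun x => (hz.meas x).const_mul _
  have hind : iIndepFun X μ := hz.indep.comp (fun x y => l x * y) (fun x => measurable_const_mul _)
  have ha' : -1 / a ≤ 0 := div_nonpos_of_nonpos_of_nonneg (by norm_num) ha.le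
  have hbd : ∀ Y : Ωz → ℝ, Measurable Y → (∀ ζ, 0 ≤ Y ζ) → Integrable (fun ζ => Real.exp (-1 / a * Y ζ)) μ := by
    intro Y hY hY0
    refine Integrable.of_bound (by fun_prop) 1 (Eventually.of_forall fun ζ => ?_)
    rw [Real.norm_of_nonneg (Real.exp_pos _).le]
    exact Real.exp_le_one_iff.2 (mul_nonpos_of_nonpos_of_nonneg ha' (hY0 ζ))
  have h1 := measure_le_le_exp_mul_mgf (μ := μ) (X := ∑ x ∈ Λ, X x) (t := -1 / a) a ha'
    (hbd _ (by
      have : (∑ x ∈ Λ, X x) = fun ζ => ∑ x ∈ Λ, X x ζ := by ext ζ; simp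
      rw [this]; exact Finset.measurable_sum _ fun x _ => hXm x) (fun ζ => by
      rw [Finset.sum_apply]; exact Finset.sum_nonneg fun x _ => mul_nonneg (hl x) (hz.nonneg x ζ)))
  rw [hind.mgf_sum hXm] at h1
  have hset : {ζ | ∑ x ∈ Λ, l x * z x ζ ≤ a} = {ζ | (∑ x ∈ Λ, X x) ζ ≤ a} := by
    ext ζ; simp [hX]
  rw [hset]
  refine h1.trans ?_
  have e1 : -(-1 / a) * a = 1 := by field_simp
  rw [e1, sub_eq_add_neg, Real.exp_add]
  gcongr
  set κ := (1 - Real.exp (-(M * r / a))) * μ.real {ζ | r < z 0 ζ} with hκ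
  have hx : ∀ x, mgf (X x) μ (-1 / a) ≤ Real.exp (-(l x / M * κ)) := by
    intro x
    have hq : μ.real {ζ | r < z x ζ} = μ.real {ζ | r < z 0 ζ} := by
      have := (hz.ident x).measure_mem_eq (measurableSet_Ioi (a := r))
      simp only [Measure.real]
      congr 1
    have hms : MeasurableSet {ζ | r < z x ζ} := measurableSet_lt measurable_const (hz.meas x)
    have hi2 : Integrable ({ζ | r < z x ζ}.indicator (1 : Ωz → ℝ)) μ := (integrable_const (1 : ℝ)).indicator hms
    calc mgf (X x) μ (-1 / a) = ∫ ζ, Real.exp (-1 / a * (l x * z x ζ)) ∂μ := rfl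
      _ ≤ ∫ ζ, (1 - (l x / M) * ((1 - Real.exp (-(M * r / a))) * {ζ | r < z x ζ}.indicator 1 ζ)) ∂μ := by
          apply integral_mono
          · exact hbd _ (hXm x) (fun ζ => mul_nonneg (hl x) (hz.nonneg x ζ))
          · exact (integrable_const _).sub ((hi2.const_mul _).const_mul _)
          · intro ζ
            exact scen_pt (l x) M a r (z x ζ) (hl x) (hlM x) hM ha hr (hz.nonneg x ζ)
      _ = 1 - l x / M * κ := by
          rw [integral_sub (integrable_const _) ((hi2.const_mul _).const_mul _), integral_const_mul, integral_const_mul,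
            integral_indicator_one hms, hq]
          simp [hκ]
      _ ≤ _ := by
          have := Real.add_one_le_exp (-(l x / M * κ))
          linarith
  calc ∏ x ∈ Λ, mgf (X x) μ (-1 / a) ≤ ∏ x ∈ Λ, Real.exp (-(l x / M * κ)) :=
        Finset.prod_le_prod (fun x _ => mgf_nonneg) (fun x _ => hx x)
    _ = _ := by
        rw [← Real.exp_sum, Finset.sum_neg_distrib, ← Finset.sum_mul, Finset.sum_div]

lemma tail_lower (hz : IsScenery d α μ z) (η : ℝ) (hα : 0 < α) (hη : 0 < η) :
    ∀ᶠ r : ℝ in atTop, r ^ (-(α + η)) ≤ μ.real {ζ | r < z 0 ζ} := by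
  have h1 := hz.tail.eventually (lt_mem_nhds (show -(α + η) < -α by linarith))
  have h2 := hz.tail.eventually (gt_mem_nhds (show -α < 0 by linarith))
  filter_upwards [h1, h2, eventually_gt_atTop 1] with r h1 h2 hr
  have hl := Real.log_pos hr
  have hq : 0 < μ.real {ζ | r < z 0 ζ} := by
    rcases (measureReal_nonneg (μ := μ) (s := {ζ | r < z 0 ζ})).lt_or_eq with h | h
    · exact h
    · exfalso
      simp only [Measure.real] at h
      rw [← h] at h2; simp at h2
  rw [lt_div_iff₀ hl] at h1
  rw [Real.rpow_def_of_pos (by linarith), ← Real.le_log_iff_exp_le hq, mul_comm]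
  exact h1.le

lemma tail_upper (hz : IsScenery d α μ z) (hα : 0 < α) :
    ∀ᶠ r : ℝ in atTop, μ.real {ζ | r < z 0 ζ} ≤ r ^ (-(α / 2)) := by
  have h2 := hz.tail.eventually (gt_mem_nhds (show -α < -(α / 2) by linarith))
  filter_upwards [h2, eventually_gt_atTop 1] with r h2 hr
  have hl := Real.log_pos hr
  rcases (measureReal_nonneg (μ := μ) (s := {ζ | r < z 0 ζ})).lt_or_eq with h | h
  · rw [div_lt_iff₀ hl] at h2
    rw [Real.rpow_def_of_pos (by linarith), ← Real.log_le_iff_le_exp h, mul_comm]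
    exact h2.le
  · rw [← h]; positivity

lemma sExp_eq_le (hd : 1 ≤ d) (hα : 0 < α) (h1 : α ≤ 1) : sExp d α = bet d + (1 - bet d) / α := by
  unfold sExp bet
  split_ifs with h
  · rw [max_eq_left]
    · field_simp; ring
    · rw [le_div_iff₀ (by positivity)]; linarith
  · rw [max_eq_left]
    · ring
    · rw [le_div_iff₀ (by positivity)]; linarith

lemma sExp_eq_ge (hα : 0 < α) (h1 : 1 ≤ α) : sExp d α = 1 := by
  unfold sExp
  split_ifs with h
  · rw [max_eq_right]
    rw [div_le_iff₀ (by positivity)]; linarith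
  · rw [max_eq_right]
    rw [div_le_iff₀ (by positivity)]; linarith

lemma scen_tail (hd : 1 ≤ d) (hα : 0 < α) (hz : IsScenery d α μ z) (ε : ℝ) (hε : 0 < ε) (hε1 : ε ≤ 1 / 4) :
    ∃ δ > (0 : ℝ), ∃ c > (0 : ℝ), ∀ᶠ n : ℕ in atTop, ∀ (Λ : Finset (Fin d → ℤ)) (l : (Fin d → ℤ) → ℝ),
      (∀ x, 0 ≤ l x) → (∀ x, l x ≤ (n : ℝ) ^ (bet d + δ)) → ∑ x ∈ Λ, l x = n →
      μ.real {ζ | ∑ x ∈ Λ, l x * z x ζ ≤ (n : ℝ) ^ (sExp d α - ε)} ≤ Real.exp (-((n : ℝ) ^ c)) := by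
  have := hz.prob
  have hb0 := bet_nonneg d
  have hb2 : bet d ≤ 1 / 2 := by unfold bet; split_ifs <;> norm_num
  rcases le_or_gt α 1 with h1 | h1
  ·
    rw [sExp_eq_le hd hα h1]
    set δ := α * ε / 4 with hδ
    have hδ0 : 0 < δ := by positivity
    have hδε : δ ≤ ε / 4 := by rw [hδ]; nlinarith
    set ρ := (1 - bet d) / α - ε - δ with hρ
    have hba : 1 / 2 ≤ (1 - bet d) / α := by rw [le_div_iff₀ hα]; nlinarith
    have hρ0 : 0 < ρ := by linarith
    set η := α * ε / (4 * ρ) with hη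
    have hη0 : 0 < η := by positivity
    refine ⟨δ, hδ0, α * ε / 4, by positivity, ?_⟩
    have ht := ((tendsto_rpow_atTop hρ0).comp (tendsto_natCast_atTop_atTop (R := ℝ))).eventually (tail_lower hz η hα hη0)
    filter_upwards [ht, ev_const 4 (α * ε / 4) (by positivity), eventually_ge_atTop 1] with n hn hn4 hn1 Λ l hl hlM hsum
    have hn1' : (1 : ℝ) ≤ n := by exact_mod_cast hn1
    have hnp : (0 : ℝ) < n := by linarith
    simp only [Function.comp] at hn
    have hs := scen_le hz Λ l ((n : ℝ) ^ (bet d + δ)) ((n : ℝ) ^ (bet d + (1 - bet d) / α - ε)) ((n : ℝ) ^ ρ)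
      hl hlM (by positivity) (by positivity) (by positivity)
    refine hs.trans (Real.exp_le_exp.2 ?_)
    rw [hsum]
    have e1 : (n : ℝ) ^ (bet d + δ) * (n : ℝ) ^ ρ / (n : ℝ) ^ (bet d + (1 - bet d) / α - ε) = 1 := by
      rw [← Real.rpow_add hnp, ← Real.rpow_sub hnp, hρ]
      convert Real.rpow_zero _ using 2; ring
    rw [e1]
    have e2 : (1 : ℝ) / 2 ≤ 1 - Real.exp (-1) := by
      have := Real.exp_neg_one_lt_d9
      linarith
    have e3 : (n : ℝ) / (n : ℝ) ^ (bet d + δ) * (n : ℝ) ^ (ρ * (-(α + η))) = (n : ℝ) ^ (1 - (bet d + δ) + ρ * (-(α + η))) := by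
      rw [Real.rpow_add hnp (1 - (bet d + δ)), Real.rpow_sub hnp, Real.rpow_one]
    have e4 : α * ε / 4 + α * ε / 4 ≤ 1 - (bet d + δ) + ρ * (-(α + η)) := by
      have : ρ * η = α * ε / 4 := by rw [hη]; field_simp
      have h5 : ρ * α = (1 - bet d) - α * ε - α * δ := by rw [hρ]; field_simp
      have : 0 < α * δ := by positivity
      have : ρ * (-(α + η)) = - (ρ * α) - ρ * η := by ring
      linarith
    have e5 : (n : ℝ) ^ (α * ε / 4) * (n : ℝ) ^ (α * ε / 4) ≤ (n : ℝ) ^ (1 - (bet d + δ) + ρ * (-(α + η))) := by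
      rw [← Real.rpow_add hnp]; exact Real.rpow_le_rpow_of_exponent_le hn1' e4
    rw [← Real.rpow_mul hnp.le] at hn
    have e6 : (n : ℝ) / (n : ℝ) ^ (bet d + δ) * (1 / 2 * (n : ℝ) ^ (ρ * (-(α + η))))
        ≤ (n : ℝ) / (n : ℝ) ^ (bet d + δ) * ((1 - Real.exp (-1)) * μ.real {ζ | (n : ℝ) ^ ρ < z 0 ζ}) := by
      gcongr
    have e7 : (n : ℝ) / (n : ℝ) ^ (bet d + δ) * (1 / 2 * (n : ℝ) ^ (ρ * (-(α + η))))
        = 1 / 2 * (n : ℝ) ^ (1 - (bet d + δ) + ρ * (-(α + η))) := by rw [← e3]; ring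
    have e8 : 2 * (n : ℝ) ^ (α * ε / 4) ≤ 1 / 2 * ((n : ℝ) ^ (α * ε / 4) * (n : ℝ) ^ (α * ε / 4)) := by nlinarith
    linarith
  · rw [sExp_eq_ge hα h1.le]
    obtain ⟨r, hr, hr1⟩ := ((tail_lower hz 1 hα one_pos).and (eventually_ge_atTop 1)).exists
    set q := μ.real {ζ | r < z 0 ζ} with hq
    have hq0 : 0 < q := lt_of_lt_of_le (by positivity) hr
    have hr0 : 0 < r := by linarith
    refine ⟨1 / 8, by norm_num, ε / 2, by positivity, ?_⟩
    filter_upwards [ev_const (4 / (q * r)) (ε / 2) (by positivity), ev_const 1 (ε / 2) (by positivity),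
      ev_const r (1 / 8) (by norm_num), eventually_ge_atTop 1] with n hn hn2 hn3 hn1 Λ l hl hlM hsum
    have hn1' : (1 : ℝ) ≤ n := by exact_mod_cast hn1
    have hnp : (0 : ℝ) < n := by linarith
    have hs := scen_le hz Λ l ((n : ℝ) ^ (bet d + 1 / 8)) ((n : ℝ) ^ (1 - ε)) r
      hl hlM (by positivity) (by positivity) hr0.le
    refine hs.trans (Real.exp_le_exp.2 ?_)
    rw [hsum, ← hq]
    set M := (n : ℝ) ^ (bet d + 1 / 8) with hM
    set a := (n : ℝ) ^ (1 - ε) with ha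
    have hM0 : 0 < M := by positivity
    have ha0 : 0 < a := by positivity
    set y := M * r / a with hy
    have hy0 : 0 < y := by positivity
    have hy1 : y ≤ 1 := by
      rw [hy, div_le_one ha0]
      calc M * r ≤ M * (n : ℝ) ^ ((1 : ℝ) / 8) := by gcongr
        _ = (n : ℝ) ^ (bet d + 1 / 8 + 1 / 8) := by rw [hM, Real.rpow_add hnp (bet d + 1 / 8)]
        _ ≤ a := Real.rpow_le_rpow_of_exponent_le hn1' (by linarith)
    have hk : y / 2 ≤ 1 - Real.exp (-y) := by
      have h5 := Real.add_one_le_exp y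
      have h6 : Real.exp (-y) * Real.exp y = 1 := by rw [← Real.exp_add]; simp
      have h7 := Real.exp_pos (-y)
      have h8 : Real.exp (-y) * (y + 1) ≤ 1 := by nlinarith
      nlinarith
    have e6 : (n : ℝ) / M * (y / 2 * q) ≤ (n : ℝ) / M * ((1 - Real.exp (-y)) * q) := by gcongr
    have e7 : (n : ℝ) / M * (y / 2 * q) = (q * r) / 2 * (n : ℝ) ^ ε := by
      have : (n : ℝ) ^ ε = n / a := by
        rw [ha, Real.rpow_sub hnp, Real.rpow_one]; field_simp
      rw [this, hy]; field_simp
    have e8 : (n : ℝ) ^ ε = (n : ℝ) ^ (ε / 2) * (n : ℝ) ^ (ε / 2) := by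
      rw [← Real.rpow_add hnp]; ring_nf
    have e9 : 4 ≤ q * r * (n : ℝ) ^ (ε / 2) := by
      rw [div_le_iff₀ (by positivity)] at hn; linarith
    have e10 : 2 * (n : ℝ) ^ (ε / 2) ≤ (q * r) / 2 * (n : ℝ) ^ ε := by
      rw [e8]; nlinarith
    linarith
end scenery

open MeasureTheory ProbabilityTheory Filter Set

lemma summable_int_exp (κ : ℝ) (hκ : 0 < κ) : Summable fun a : ℤ => Real.exp (-κ * |(a : ℝ)|) := by
  have h : Summable fun n : ℕ => Real.exp (-κ * |((n : ℤ) : ℝ)|) := by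
    have := Real.summable_exp_nat_mul_iff (a := -κ) |>.2 (by linarith)
    refine this.congr fun n => ?_
    simp [mul_comm]
  refine Summable.of_nat_of_neg h ?_
  simpa using h

lemma tsum_exp_l1 (κ : ℝ) (hκ : 0 < κ) (m : ℕ) :
    ∑' x : Fin m → ℤ, ENNReal.ofReal (Real.exp (-κ * l1d m x 0)) ≠ ⊤ := by
  have h0 : ∑' a : ℤ, ENNReal.ofReal (Real.exp (-κ * |(a : ℝ)|)) ≠ ⊤ :=
    (summable_int_exp κ hκ).tsum_ofReal_ne_top
  have h : ∑' x : Fin m → ℤ, ENNReal.ofReal (Real.exp (-κ * l1d m x 0))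
      = (∑' a : ℤ, ENNReal.ofReal (Real.exp (-κ * |(a : ℝ)|))) ^ m := by
    induction m with
    | zero => simp [l1d]
    | succ m ih =>
      rw [← (Fin.consEquiv (fun _ : Fin (m + 1) => ℤ)).tsum_eq, ENNReal.tsum_prod', pow_succ', ← ih, ← ENNReal.tsum_mul_right]
      refine tsum_congr fun a => ?_
      rw [← ENNReal.tsum_mul_left]
      refine tsum_congr fun x => ?_
      rw [← ENNReal.ofReal_mul (Real.exp_pos _).le, ← Real.exp_add, ← mul_add]
      simp [l1d, Fin.sum_univ_succ, Fin.consEquiv]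
  rw [h]
  exact ENNReal.pow_ne_top h0

section scenery
variable {d : ℕ} {α : ℝ} {Ωz Ωw : Type*} [MeasurableSpace Ωz] [MeasurableSpace Ωw]
    {μ : Measure Ωz} {z : (Fin d → ℤ) → Ωz → ℝ}
    {P : (Fin d → ℤ) → Measure Ωw} {S : ℝ → Ωw → (Fin d → ℤ)}

lemma l1d_nonneg (m : ℕ) (x y : Fin m → ℤ) : 0 ≤ l1d m x y :=
  Finset.sum_nonneg fun i _ => abs_nonneg _

lemma l1d_comm (m : ℕ) (x y : Fin m → ℤ) : l1d m x y = l1d m y x :=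
  Finset.sum_congr rfl fun i _ => abs_sub_comm _ _

lemma scen_growth (hα : 0 < α) (hz : IsScenery d α μ z) :
    ∀ᵐ ζ ∂μ, ∃ D : ℝ, 0 ≤ D ∧ ∀ x, z x ζ ≤ D * Real.exp (l1d d x 0) := by
  have := hz.prob
  obtain ⟨r0, hr0⟩ := eventually_atTop.1 (tail_upper hz hα)
  set r1 := max r0 1 with hr1
  have hr11 : 1 ≤ r1 := le_max_right _ _
  have hq : ∀ r : ℝ, 1 ≤ r → μ.real {ζ | r < z 0 ζ} ≤ r1 ^ (α / 2) * r ^ (-(α / 2)) := by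
    intro r hr
    rcases le_or_gt r0 r with h | h
    · refine (hr0 r h).trans ?_
      have : 1 ≤ r1 ^ (α / 2) := Real.one_le_rpow hr11 (by positivity)
      have h2 : 0 ≤ r ^ (-(α / 2)) := by positivity
      nlinarith
    · refine (measureReal_le_one (μ := μ)).trans ?_
      rw [Real.rpow_neg (by linarith), ← div_eq_mul_inv, one_le_div (by positivity)]
      apply Real.rpow_le_rpow (by linarith) _ (by positivity)
      exact h.le.trans (le_max_left _ _)
  have hsum : ∑' x, μ {ζ | Real.exp (l1d d x 0) < z x ζ} ≠ ⊤ := by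
    refine ne_top_of_le_ne_top (ENNReal.mul_ne_top (ENNReal.ofReal_ne_top (r := r1 ^ (α / 2))) (tsum_exp_l1 (α / 2) (by positivity) d)) ?_
    rw [← ENNReal.tsum_mul_left]
    refine ENNReal.tsum_le_tsum fun x => ?_
    have e := (hz.ident x).measure_mem_eq (measurableSet_Ioi (a := Real.exp (l1d d x 0)))
    have e' : μ {ζ | Real.exp (l1d d x 0) < z x ζ} = μ {ζ | Real.exp (l1d d x 0) < z 0 ζ} := e
    rw [e', ← ENNReal.ofReal_toReal (measure_ne_top μ _), ← ENNReal.ofReal_mul (by positivity)]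
    apply ENNReal.ofReal_le_ofReal
    refine (hq _ (Real.one_le_exp (l1d_nonneg _ _ _))).trans (le_of_eq ?_)
    congr 1
    rw [← Real.exp_mul]; ring_nf
  filter_upwards [ae_finite_setOfPred_mem hsum] with ζ hζ
  refine ⟨1 + ∑ x ∈ hζ.toFinset, z x ζ, ?_, ?_⟩
  · exact add_nonneg zero_le_one (Finset.sum_nonneg fun x _ => hz.nonneg x ζ)
  · intro x
    have h1 : 1 ≤ Real.exp (l1d d x 0) := Real.one_le_exp (l1d_nonneg _ _ _)
    have hs0 : 0 ≤ ∑ x ∈ hζ.toFinset, z x ζ := Finset.sum_nonneg fun x _ => hz.nonneg x ζ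
    by_cases hx : Real.exp (l1d d x 0) < z x ζ
    · have : z x ζ ≤ ∑ x ∈ hζ.toFinset, z x ζ :=
        Finset.single_le_sum (f := fun x => z x ζ) (fun x _ => hz.nonneg x ζ) (hζ.mem_toFinset.2 hx)
      nlinarith
    · push Not at hx
      nlinarith

lemma walk_integrable (hd : 1 ≤ d) (hS : IsCTSRW d P S) (f : (Fin d → ℤ) → ℝ) (hf : ∀ x, 0 ≤ f x) (D : ℝ) (hD : 0 ≤ D)
    (hfD : ∀ x, f x ≤ D * Real.exp (l1d d x 0)) (t : ℝ) :
    ∀ᵐ ω ∂(P 0), IntegrableOn (fun u => f (S u ω)) (Ioc 0 t) := by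
  have := hS.prob 0
  have hfm : Measurable f := measurable_of_countable f
  have hjm : Measurable fun p : ℝ × Ωw => ENNReal.ofReal (f (S p.1 p.2)) := (hfm.comp hS.meas).ennreal_ofReal
  have hjm' : Measurable fun p : Ωw × ℝ => ENNReal.ofReal (f (S p.2 p.1)) := hjm.comp measurable_swap
  have hfin : ∫⁻ ω, (∫⁻ u in Ioc 0 t, ENNReal.ofReal (f (S u ω))) ∂(P 0) ≠ ⊤ := by
    rw [lintegral_lintegral_swap hjm'.aemeasurable]
    set C := Real.exp (2 * d * t * Real.exp 2) with hC
    have hb : ∀ u ∈ Ioc 0 t, ∫⁻ ω, ENNReal.ofReal (f (S u ω)) ∂(P 0)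
        ≤ ENNReal.ofReal (D * C) * ∑' x : Fin d → ℤ, ENNReal.ofReal (Real.exp (-1 * l1d d x 0)) := by
      intro u hu
      rw [← lintegral_map (f := fun x => ENNReal.ofReal (f x)) (measurable_of_countable _) (walk_meas hS u),
        lintegral_countable', ← ENNReal.tsum_mul_left]
      refine ENNReal.tsum_le_tsum fun x => ?_
      rw [Measure.map_apply (walk_meas hS u) (measurableSet_singleton x)]
      have e : S u ⁻¹' {x} = {ω | S u ω = x} := rfl
      rw [e, walk_one hS u hu.1.le, ← ENNReal.ofReal_mul (hf x), ← ENNReal.ofReal_mul (by positivity)]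
      apply ENNReal.ofReal_le_ofReal
      have h1 := heat_le_exp d hd u hu.1.le 0 x
      have h2 : Real.exp (2 * d * u * Real.exp 2) ≤ C := by
        apply Real.exp_le_exp.2
        have := hu.2
        gcongr
      rw [l1d_comm] at h1
      calc f x * heatKernel d u 0 x ≤ (D * Real.exp (l1d d x 0)) * (C * Real.exp (-2 * l1d d x 0)) := by
            apply mul_le_mul (hfD x) _ (heat_nonneg _ _ hu.1.le _ _) (by positivity)
            exact h1.trans (by gcongr)
        _ = D * C * (Real.exp (l1d d x 0) * Real.exp (-2 * l1d d x 0)) := by ring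
        _ = _ := by rw [← Real.exp_add]; ring_nf
    refine ne_top_of_le_ne_top ?_ (setLIntegral_mono' measurableSet_Ioc hb)
    rw [setLIntegral_const]
    refine ENNReal.mul_ne_top (ENNReal.mul_ne_top ENNReal.ofReal_ne_top (tsum_exp_l1 1 one_pos d)) ?_
    simp
  have hm2 : Measurable fun ω => ∫⁻ u in Ioc 0 t, ENNReal.ofReal (f (S u ω)) := hjm'.lintegral_prod_right'
  filter_upwards [ae_lt_top hm2 hfin] with ω hω
  refine ⟨?_, ?_⟩
  · exact (hfm.comp (hS.meas.comp (measurable_id.prodMk measurable_const))).aestronglyMeasurable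
  · rw [hasFiniteIntegral_iff_ofReal (Eventually.of_forall fun u => hf _)]
    exact hω

lemma annealed_v (hd : 1 ≤ d) (hα : 0 < α) (hz : IsScenery d α μ z) (hS : IsCTSRW d P S)
    (ε : ℝ) (hε : 0 < ε) (hε1 : ε ≤ 1 / 4) :
    ∃ c > (0 : ℝ), ∀ᶠ n : ℕ in atTop, ∀ v : ℝ, 0 ≤ v →
      ∫⁻ ω, μ {ζ | ∑ i ∈ Finset.range n, z (S (v + i) ω) ζ ≤ (n : ℝ) ^ (sExp d α - ε)} ∂(P 0)
        ≤ 2 * ENNReal.ofReal (Real.exp (-((n : ℝ) ^ c))) := by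
  have := hz.prob
  have := hS.prob 0
  obtain ⟨δ, hδ, c, hc, hsc⟩ := scen_tail hd hα hz ε hε hε1
  refine ⟨min (δ / 4) c, by positivity, ?_⟩
  filter_upwards [hsc, walk_tail hd hS δ hδ, eventually_ge_atTop 1] with n hn hw hn1 v hv
  have hn1' : (1 : ℝ) ≤ n := by exact_mod_cast hn1
  set B := {ω | ∃ x, (n : ℝ) ^ (bet d + δ) < visits S v n ω x} with hB
  set η := ENNReal.ofReal (Real.exp (-((n : ℝ) ^ c))) with hη
  have hpt : ∀ ω, μ {ζ | ∑ i ∈ Finset.range n, z (S (v + i) ω) ζ ≤ (n : ℝ) ^ (sExp d α - ε)}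
      ≤ (toMeasurable (P 0) B).indicator 1 ω + η := by
    intro ω
    by_cases hω : ω ∈ B
    · rw [indicator_of_mem (subset_toMeasurable _ _ hω)]
      exact prob_le_one.trans (by simp)
    · refine le_trans ?_ le_add_self
      have hω' : ∀ x, (visits S v n ω x : ℝ) ≤ (n : ℝ) ^ (bet d + δ) := by
        intro x; by_contra h; exact hω ⟨x, not_le.1 h⟩
      classical
      have h := hn ((Finset.range n).image fun i : ℕ => S (v + i) ω) (fun x => (visits S v n ω x : ℝ))
        (fun x => by positivity) hω' (by
          have := Finset.sum_comp (s := Finset.range n) (fun _ : Fin d → ℤ => (1 : ℝ)) (fun i : ℕ => S (v + i) ω)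
          simp only [Finset.sum_const, Finset.card_range, nsmul_eq_mul, mul_one] at this
          rw [this]
          refine Finset.sum_congr rfl fun x _ => ?_
          unfold visits; congr!)
      have e : {ζ | ∑ i ∈ Finset.range n, z (S (v + i) ω) ζ ≤ (n : ℝ) ^ (sExp d α - ε)}
          = {ζ | ∑ x ∈ (Finset.range n).image fun i : ℕ => S (v + i) ω, (visits S v n ω x : ℝ) * z x ζ ≤ (n : ℝ) ^ (sExp d α - ε)} := by
        ext ζ
        have := Finset.sum_comp (s := Finset.range n) (fun x : Fin d → ℤ => z x ζ) (fun i : ℕ => S (v + i) ω)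
        simp only [nsmul_eq_mul] at this
        simp only [mem_ofPred_eq]
        rw [this]
        have e2 : ∀ x, ((Finset.range n).filter fun i : ℕ => S (v + i) ω = x).card = visits S v n ω x := by
          intro x; unfold visits; congr!
        simp only [e2]
      rw [e, ← ENNReal.ofReal_toReal (measure_ne_top μ _)]
      exact ENNReal.ofReal_le_ofReal h
  refine (lintegral_mono hpt).trans ?_
  rw [lintegral_add_right _ measurable_const, lintegral_indicator_one (measurableSet_toMeasurable _ _), measure_toMeasurable,
    lintegral_const, measure_univ, mul_one, two_mul]
  refine add_le_add ((hw v hv).trans ?_) ?_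
  · apply ENNReal.ofReal_le_ofReal
    apply Real.exp_le_exp.2
    exact neg_le_neg (Real.rpow_le_rpow_of_exponent_le hn1' (min_le_left _ _))
  · apply ENNReal.ofReal_le_ofReal
    apply Real.exp_le_exp.2
    exact neg_le_neg (Real.rpow_le_rpow_of_exponent_le hn1' (min_le_right _ _))
end scenery

open MeasureTheory ProbabilityTheory Filter Set

lemma lint_split (h : ℝ → ENNReal) (hm : Measurable h) (n : ℕ) :
    ∫⁻ u in Ioc (0 : ℝ) n, h u = ∫⁻ v in Ioc (0 : ℝ) 1, ∑ i ∈ Finset.range n, h (v + i) := by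
  induction n with
  | zero => simp
  | succ n ih =>
    have e : Ioc (0 : ℝ) ((n + 1 : ℕ) : ℝ) = Ioc (0 : ℝ) n ∪ Ioc (n : ℝ) (n + 1) := by
      rw [Ioc_union_Ioc_eq_Ioc (by positivity) (by linarith)]; push_cast; rfl
    have hd : Disjoint (Ioc (0 : ℝ) n) (Ioc (n : ℝ) (n + 1)) := by
      rw [Set.disjoint_left]; intro x hx hy; exact absurd hx.2 (not_le.2 hy.1)
    rw [e, lintegral_union measurableSet_Ioc hd, ih]
    simp_rw [Finset.sum_range_succ]
    have hm' : Measurable fun v : ℝ => h (v + n) := hm.comp (measurable_id.add_const _)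
    rw [lintegral_add_right _ hm']
    congr 1
    have := (measurePreserving_add_right (volume : Measure ℝ) (n : ℝ)).setLIntegral_comp_preimage_emb
      (measurableEmbedding_addRight (n : ℝ)) h (Ioc (n : ℝ) (n + 1))
    rw [← this]
    congr 2
    simp

lemma markov_half (h : ℝ → ℝ) (hm : Measurable h) (h0 : ∀ u, 0 ≤ h u) (a : ℝ) (ha : 0 < a) (n : ℕ)
    (hB : ∫⁻ u in Ioc (0 : ℝ) n, ENNReal.ofReal (h u) ≤ ENNReal.ofReal (a / 2)) :
    1 ≤ 2 * (volume.restrict (Ioc (0 : ℝ) 1)) {v | ∑ i ∈ Finset.range n, h (v + i) ≤ a} := by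
  rw [lint_split _ hm.ennreal_ofReal] at hB
  set ν := volume.restrict (Ioc (0 : ℝ) 1)
  have hν : ν univ = 1 := by simp [ν]
  set F : ℝ → ENNReal := fun v => ∑ i ∈ Finset.range n, ENNReal.ofReal (h (v + i)) with hF
  have hFm : Measurable F := Finset.measurable_fun_sum _ fun i _ =>
    (hm.comp (measurable_id.add_const _)).ennreal_ofReal
  have h1 := mul_meas_ge_le_lintegral (μ := ν) hFm (ENNReal.ofReal a)
  have h2 : ENNReal.ofReal a * (2 * ν {v | ENNReal.ofReal a ≤ F v}) ≤ ENNReal.ofReal a * 1 := by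
    calc _ = 2 * (ENNReal.ofReal a * ν {v | ENNReal.ofReal a ≤ F v}) := by ring
      _ ≤ 2 * ENNReal.ofReal (a / 2) := by gcongr; exact h1.trans hB
      _ = _ := by
        rw [show (2 : ENNReal) = ENNReal.ofReal 2 by simp, ← ENNReal.ofReal_mul (by norm_num), mul_one]
        congr 1; ring
  rw [ENNReal.mul_le_mul_iff_right (by simpa using ha) ENNReal.ofReal_ne_top] at h2
  have h3 : ν univ ≤ ν {v | ENNReal.ofReal a ≤ F v} + ν {v | ∑ i ∈ Finset.range n, h (v + i) ≤ a} := by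
    refine (measure_mono ?_).trans (measure_union_le _ _)
    intro v _
    by_cases hv : ENNReal.ofReal a ≤ F v
    · exact Or.inl hv
    · right
      push Not at hv
      rw [hF] at hv
      simp only at hv
      rw [← ENNReal.ofReal_sum_of_nonneg (fun i _ => h0 _), ENNReal.ofReal_lt_ofReal_iff ha] at hv
      exact hv.le
  rw [hν] at h3
  have h4 : (2 : ENNReal) ≤ 1 + 2 * ν {v | ∑ i ∈ Finset.range n, h (v + i) ≤ a} := by
    calc (2 : ENNReal) = 2 * 1 := by ring
      _ ≤ 2 * (ν {v | ENNReal.ofReal a ≤ F v} + ν {v | ∑ i ∈ Finset.range n, h (v + i) ≤ a}) := by gcongr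
      _ = 2 * ν {v | ENNReal.ofReal a ≤ F v} + 2 * ν {v | ∑ i ∈ Finset.range n, h (v + i) ≤ a} := by ring
      _ ≤ _ := by gcongr
  rw [show (2 : ENNReal) = 1 + 1 by norm_num] at h4
  exact (ENNReal.add_le_add_iff_left ENNReal.one_ne_top).1 (by simpa [one_add_one_eq_two] using h4)

section fin
variable {d : ℕ} {α : ℝ} {Ωz Ωw : Type*} [MeasurableSpace Ωz] [MeasurableSpace Ωw]
    {μ : Measure Ωz} {z : (Fin d → ℤ) → Ωz → ℝ}
    {P : (Fin d → ℤ) → Measure Ωw} {S : ℝ → Ωw → (Fin d → ℤ)}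

lemma joint_meas (hz : IsScenery d α μ z) (hS : IsCTSRW d P S) (n : ℕ) :
    Measurable fun q : (ℝ × Ωw) × Ωz => ∑ i ∈ Finset.range n, z (S (q.1.1 + i) q.1.2) q.2 := by
  have h1 : Measurable fun q : (Fin d → ℤ) × Ωz => z q.1 q.2 :=
    measurable_from_prod_countable_right fun x => hz.meas x
  refine Finset.measurable_fun_sum _ fun i _ => ?_
  have h2 : Measurable fun q : (ℝ × Ωw) × Ωz => (S (q.1.1 + i) q.1.2, q.2) := by
    refine Measurable.prodMk ?_ measurable_snd
    exact hS.meas.comp (f := fun q : (ℝ × Ωw) × Ωz => (q.1.1 + (i : ℝ), q.1.2)) (by fun_prop)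
  exact h1.comp h2

/-- the annealed bound for the integrated process -/
lemma annealed_int (hz : IsScenery d α μ z) (hS : IsCTSRW d P S) (n : ℕ) (a : ℝ) (ha : 0 < a)
    (b : ENNReal) (hb : ∀ v : ℝ, 0 ≤ v →
      ∫⁻ ω, μ {ζ | ∑ i ∈ Finset.range n, z (S (v + i) ω) ζ ≤ a} ∂(P 0) ≤ b) :
    ∃ K : Ωz → ENNReal, Measurable K ∧ ∫⁻ ζ, K ζ ∂μ ≤ 2 * b ∧
      ∀ ζ, P 0 {ω | ∫⁻ u in Ioc (0 : ℝ) n, ENNReal.ofReal (z (S u ω) ζ) ≤ ENNReal.ofReal (a / 2)} ≤ K ζ := by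
  have := hz.prob
  have := hS.prob 0
  set ν := volume.restrict (Ioc (0 : ℝ) 1) with hν
  set G : Set ((ℝ × Ωw) × Ωz) := {q | ∑ i ∈ Finset.range n, z (S (q.1.1 + i) q.1.2) q.2 ≤ a} with hG
  have hGm : MeasurableSet G := measurableSet_le (joint_meas hz hS n) measurable_const
  set g : ((ℝ × Ωw) × Ωz) → ENNReal := G.indicator 1 with hg
  have hgm : Measurable g := measurable_one.indicator hGm
  refine ⟨fun ζ => 2 * ∫⁻ p, g (p, ζ) ∂(ν.prod (P 0)), ?_, ?_, ?_⟩
  · exact (hgm.lintegral_prod_left').const_mul 2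
  · rw [lintegral_const_mul _ hgm.lintegral_prod_left']
    gcongr
    rw [lintegral_lintegral_swap (f := fun ζ p => g (p, ζ)) (hgm.comp measurable_swap).aemeasurable]
    have e : ∀ p : ℝ × Ωw, ∫⁻ ζ, g (p, ζ) ∂μ = μ {ζ | ∑ i ∈ Finset.range n, z (S (p.1 + i) p.2) ζ ≤ a} := by
      intro p
      have : (fun ζ => g (p, ζ)) = ({ζ | ∑ i ∈ Finset.range n, z (S (p.1 + i) p.2) ζ ≤ a}).indicator 1 := by
        funext ζ; rfl
      rw [this, lintegral_indicator_one]
      exact hGm.preimage (measurable_const.prodMk measurable_id)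
    have hm2 : Measurable fun p : ℝ × Ωw => ∫⁻ ζ, g (p, ζ) ∂μ := hgm.lintegral_prod_right'
    rw [lintegral_prod _ hm2.aemeasurable]
    simp_rw [e]
    calc _ ≤ ∫⁻ v in Ioc (0 : ℝ) 1, b := setLIntegral_mono' measurableSet_Ioc fun v hv => hb v hv.1.le
      _ = b := by simp
  · intro ζ
    have hm3 : Measurable fun p : ℝ × Ωw => g (p, ζ) := hgm.comp (measurable_id.prodMk measurable_const)
    have hm4 : Measurable fun ω : Ωw => ∫⁻ v, g ((v, ω), ζ) ∂ν := hm3.lintegral_prod_left'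
    simp only
    rw [lintegral_prod_symm _ hm3.aemeasurable, ← lintegral_const_mul _ hm4]
    have h1 := mul_meas_ge_le_lintegral (μ := P 0) (hm4.const_mul 2) 1
    rw [one_mul] at h1
    refine (measure_mono ?_).trans h1
    intro ω hω
    have h2 := markov_half (fun u => z (S u ω) ζ)
      ((measurable_of_countable (fun x => z x ζ)).comp (hS.meas.comp (measurable_id.prodMk measurable_const)))
      (fun u => hz.nonneg _ _) a ha n hω
    have h3 : ∫⁻ v, g ((v, ω), ζ) ∂ν = ν {v | ∑ i ∈ Finset.range n, z (S (v + i) ω) ζ ≤ a} := by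
      have : (fun v => g ((v, ω), ζ)) = ({v | ∑ i ∈ Finset.range n, z (S (v + i) ω) ζ ≤ a}).indicator 1 := by
        funext v; rfl
      rw [this, lintegral_indicator_one]
      exact hGm.preimage ((measurable_id.prodMk measurable_const).prodMk measurable_const)
    show 1 ≤ 2 * ∫⁻ v, g ((v, ω), ζ) ∂ν
    rw [h3]
    exact h2

lemma quenched_n (hd : 1 ≤ d) (hα : 0 < α) (hz : IsScenery d α μ z) (hS : IsCTSRW d P S)
    (ε : ℝ) (hε : 0 < ε) (hε1 : ε ≤ 1 / 4) :
    ∃ c > (0 : ℝ), ∀ᵐ ζ ∂μ, ∀ᶠ n : ℕ in atTop,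
      P 0 {ω | ∫⁻ u in Ioc (0 : ℝ) n, ENNReal.ofReal (z (S u ω) ζ)
          ≤ ENNReal.ofReal ((n : ℝ) ^ (sExp d α - ε) / 2)}
        ≤ ENNReal.ofReal (Real.exp (-((n : ℝ) ^ c / 2))) := by
  obtain ⟨c, hc, hn⟩ := annealed_v hd hα hz hS ε hε hε1
  refine ⟨c, hc, ?_⟩
  obtain ⟨n0, hn0⟩ := eventually_atTop.1
    ((hn.and (ev_log 4 c hc)).and (eventually_ge_atTop 1))
  have key : ∀ k : ℕ, ∃ K : Ωz → ENNReal, Measurable K ∧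
      ∫⁻ ζ, K ζ ∂μ ≤ 2 * (2 * ENNReal.ofReal (Real.exp (-(((k + n0 : ℕ) : ℝ) ^ c)))) ∧
      ∀ ζ, P 0 {ω | ∫⁻ u in Ioc (0 : ℝ) ((k + n0 : ℕ) : ℝ), ENNReal.ofReal (z (S u ω) ζ)
        ≤ ENNReal.ofReal (((k + n0 : ℕ) : ℝ) ^ (sExp d α - ε) / 2)} ≤ K ζ := by
    intro k
    have h := hn0 (k + n0) (by omega)
    have hp : (0 : ℝ) < ((k + n0 : ℕ) : ℝ) := by exact_mod_cast h.2
    exact annealed_int hz hS (k + n0) _ (Real.rpow_pos_of_pos hp _) _ h.1.1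
  choose K hKm hKi hK using key
  have hs : ∑' k : ℕ, μ {ζ | ENNReal.ofReal (Real.exp (-(((k + n0 : ℕ) : ℝ) ^ c / 2))) ≤ K k ζ} ≠ ⊤ := by
    have hsum : Summable fun k : ℕ => 4 * (1 / ((k + n0 : ℕ) : ℝ) ^ 2) := by
      apply Summable.mul_left
      exact (summable_nat_add_iff n0).2 (Real.summable_one_div_nat_pow.2 (by norm_num))
    refine ne_top_of_le_ne_top hsum.tsum_ofReal_ne_top (ENNReal.tsum_le_tsum fun k => ?_)
    have h := hn0 (k + n0) (by omega)
    set N := ((k + n0 : ℕ) : ℝ) with hN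
    have hp : (1 : ℝ) ≤ N := by rw [hN]; exact_mod_cast h.2
    have h1 := mul_meas_ge_le_lintegral (μ := μ) (hKm k) (ENNReal.ofReal (Real.exp (-(N ^ c / 2))))
    have h2 := h1.trans (hKi k)
    have h3 : ENNReal.ofReal (Real.exp (-(N ^ c / 2))) *
        μ {ζ | ENNReal.ofReal (Real.exp (-(N ^ c / 2))) ≤ K k ζ}
        ≤ ENNReal.ofReal (Real.exp (-(N ^ c / 2))) * ENNReal.ofReal (4 * Real.exp (-(N ^ c / 2))) := by
      refine h2.trans (le_of_eq ?_)
      rw [← ENNReal.ofReal_mul (Real.exp_pos _).le, mul_left_comm (Real.exp _), ← Real.exp_add,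
        ENNReal.ofReal_mul (by norm_num), ← mul_assoc]
      congr 2
      · rw [show (4 : ℝ) = 2 * 2 by norm_num, ENNReal.ofReal_mul (by norm_num)]; simp
      · congr 1; ring
    rw [ENNReal.mul_le_mul_iff_right (by simpa using Real.exp_pos _) ENNReal.ofReal_ne_top] at h3
    refine h3.trans (ENNReal.ofReal_le_ofReal ?_)
    gcongr
    have h4 : 4 * (1 + Real.log N) ≤ N ^ c := h.1.2
    rw [one_div, ← Real.exp_log (show 0 < N ^ 2 by positivity), ← Real.exp_neg]
    apply Real.exp_le_exp.2
    rw [Real.log_pow]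
    push_cast
    linarith
  filter_upwards [ae_eventually_notMem hs] with ζ hζ
  rw [eventually_atTop] at hζ
  obtain ⟨k0, hk0⟩ := hζ
  filter_upwards [eventually_ge_atTop (k0 + n0)] with n hnn
  obtain ⟨k, rfl⟩ := Nat.exists_eq_add_of_le' (show n0 ≤ n by omega)
  have h := hk0 k (by omega)
  have h' : ¬ (ENNReal.ofReal (Real.exp (-(((k + n0 : ℕ) : ℝ) ^ c / 2))) ≤ K k ζ) := h
  push Not at h'
  exact (hK k ζ).trans h'.le

lemma final_aux (hd : 1 ≤ d) (hα : 0 < α) (hz : IsScenery d α μ z) (hS : IsCTSRW d P S) (ε0 : ℝ) (hε0 : 0 < ε0) :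
    ∃ c > (0 : ℝ), ∀ᵐ ζ ∂ μ, ∀ᶠ t in (atTop : Filter ℝ),
      ((P 0) {ω | rwrs d z S t ζ ω ≤ t ^ (sExp d α - ε0)}).toReal ≤ Real.exp (-(t ^ c)) := by
  have := hS.prob 0
  set ε := min (ε0 / 2) (1 / 4) with hε
  have hεp : 0 < ε := by positivity
  have hε1 : ε ≤ 1 / 4 := min_le_right _ _
  have hε2 : 2 * ε ≤ ε0 := by have := min_le_left (ε0 / 2) (1 / 4); linarith
  have hs1 : 1 ≤ sExp d α := by unfold sExp; split_ifs <;> exact le_max_right _ _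
  set s := sExp d α with hs
  obtain ⟨c, hc, hq⟩ := quenched_n hd hα hz hS ε hεp hε1
  refine ⟨c / 2, by positivity, ?_⟩
  filter_upwards [hq, scen_growth hα hz] with ζ hζ ⟨D, hD, hgr⟩
  have hev := ((hζ.and (ev_const (2 * 2 ^ s) ε hεp)).and (ev_const (2 * 2 ^ (c / 2)) (c / 2) (by positivity))).and
    (eventually_ge_atTop 1)
  filter_upwards [(tendsto_nat_floor_atTop (α := ℝ)).eventually hev, eventually_ge_atTop 1] with t ht ht1
  set n := ⌊t⌋₊ with hn
  obtain ⟨⟨⟨h1, h2⟩, h3⟩, h4⟩ := ht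
  have hn1 : (1 : ℝ) ≤ n := by exact_mod_cast h4
  have hnt : (n : ℝ) ≤ t := Nat.floor_le (by linarith)
  have htn : t ≤ 2 * n := by have := Nat.lt_floor_add_one t; rw [← hn] at this; linarith
  have hpow : t ^ (s - ε0) ≤ (n : ℝ) ^ (s - ε) / 2 := by
    calc t ^ (s - ε0) ≤ t ^ (s - 2 * ε) := Real.rpow_le_rpow_of_exponent_le ht1 (by linarith)
      _ ≤ (2 * n) ^ (s - 2 * ε) := Real.rpow_le_rpow (by linarith) htn (by linarith)
      _ = 2 ^ (s - 2 * ε) * (n : ℝ) ^ (s - 2 * ε) := Real.mul_rpow (by norm_num) (by linarith)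
      _ ≤ 2 ^ s * (n : ℝ) ^ (s - 2 * ε) := by
        gcongr
        · norm_num
        · linarith
      _ ≤ ((n : ℝ) ^ ε / 2) * (n : ℝ) ^ (s - 2 * ε) := by
        gcongr; linarith
      _ = ((n : ℝ) ^ ε * (n : ℝ) ^ (s - 2 * ε)) / 2 := by ring
      _ = _ := by rw [← Real.rpow_add (by linarith)]; ring_nf
  have hexp : t ^ (c / 2) ≤ (n : ℝ) ^ c / 2 := by
    calc t ^ (c / 2) ≤ (2 * n) ^ (c / 2) := Real.rpow_le_rpow (by linarith) htn (by linarith)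
      _ = 2 ^ (c / 2) * (n : ℝ) ^ (c / 2) := Real.mul_rpow (by norm_num) (by linarith)
      _ ≤ ((n : ℝ) ^ (c / 2) / 2) * (n : ℝ) ^ (c / 2) := by
        gcongr; linarith
      _ = ((n : ℝ) ^ (c / 2) * (n : ℝ) ^ (c / 2)) / 2 := by ring
      _ = _ := by rw [← Real.rpow_add (by linarith)]; ring_nf
  have hsub : P 0 {ω | rwrs d z S t ζ ω ≤ t ^ (s - ε0)} ≤
      P 0 {ω | ∫⁻ u in Ioc (0 : ℝ) n, ENNReal.ofReal (z (S u ω) ζ) ≤ ENNReal.ofReal ((n : ℝ) ^ (s - ε) / 2)} := by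
    apply measure_mono_ae
    filter_upwards [walk_integrable hd hS (fun x => z x ζ) (fun x => hz.nonneg x ζ) D hD hgr t] with ω hω hle
    have hle' : rwrs d z S t ζ ω ≤ t ^ (s - ε0) := hle
    show ∫⁻ u in Ioc (0 : ℝ) n, ENNReal.ofReal (z (S u ω) ζ) ≤ ENNReal.ofReal ((n : ℝ) ^ (s - ε) / 2)
    have hsub : Ioc (0 : ℝ) n ⊆ Ioc 0 t := Ioc_subset_Ioc_right hnt
    rw [← ofReal_integral_eq_lintegral_ofReal (hω.mono_set hsub) (Eventually.of_forall fun u => hz.nonneg _ _)]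
    apply ENNReal.ofReal_le_ofReal
    refine le_trans ?_ (hle'.trans hpow)
    exact setIntegral_mono_set hω (Eventually.of_forall fun u => hz.nonneg _ _) hsub.eventuallyLE
  have := ENNReal.toReal_mono ENNReal.ofReal_ne_top (hsub.trans h1)
  rw [ENNReal.toReal_ofReal (Real.exp_pos _).le] at this
  refine this.trans (Real.exp_le_exp.2 ?_)
  linarith

end fin

/-- Proposition (lower deviation below the typical scale): for `d ≥ 1`, `α > 0` and every
`ε > 0` there is `c(ε) > 0` such that ℙ-a.s., `P₀(A(t) ≤ t^{s(d,α)-ε}) ≤ exp(-t^{c(ε)})`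
for all sufficiently large `t`. -/
theorem stmt3 (d : ℕ) (hd : 1 ≤ d) (α : ℝ) (hα : 0 < α)
    {Ωz Ωw : Type*} [MeasurableSpace Ωz] [MeasurableSpace Ωw]
    (μ : Measure Ωz) (z : (Fin d → ℤ) → Ωz → ℝ) (hz : IsScenery d α μ z)
    (P : (Fin d → ℤ) → Measure Ωw) (S : ℝ → Ωw → (Fin d → ℤ)) (hS : IsCTSRW d P S) :
    ∀ ε > (0 : ℝ), ∃ c > (0 : ℝ), ∀ᵐ ζ ∂ μ, ∀ᶠ t in (atTop : Filter ℝ),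
      ((P 0) {ω | rwrs d z S t ζ ω ≤ t ^ (sExp d α - ε)}).toReal ≤ Real.exp (-(t ^ c)) := by
  intro ε hε
  exact final_aux hd hα hz hS ε hε
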